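/- Let (Ω_n, P_n, π_n) be a sequence of finite irreducible reversible Markov chains. If the sequence exhibits an averaged cutoff with a cutoff window w_n, then it exhibits a continuous-time cutoff with cutoff window w'_n := max(w_n, √(t_c^{(n)}(1/4))). -/

import Mathlib

open Matrix Filter Asymptotics

/-- `P` is a stochastic matrix. -/
def IsStochastic {Ω : Type*} [Fintype Ω] (P : Matrix Ω Ω ℝ) : Prop :=
  (∀ x y, 0 ≤ P x y) ∧ ∀ x, ∑ y, P x y = 1

/-- `P` is irreducible. -/
def IsIrreducibleMatrix {Ω : Type*} [Fintype Ω] [DecidableEq Ω] (P : Matrix Ω Ω ℝ) : Prop :=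
  ∀ x y, ∃ n : ℕ, 0 < (P ^ n) x y

/-- `μ` is a probability vector. -/
def IsProbVec {Ω : Type*} [Fintype Ω] (μ : Ω → ℝ) : Prop :=
  (∀ x, 0 ≤ μ x) ∧ ∑ x, μ x = 1

/-- The chain `(P, pi)` is reversible. -/
def IsReversible {Ω : Type*} [Fintype Ω] (P : Matrix Ω Ω ℝ) (pi : Ω → ℝ) : Prop :=
  ∀ x y, pi x * P x y = pi y * P y x

/-- A finite irreducible Markov chain `P` with stationary distribution `pi`. -/
def IsMC {Ω : Type*} [Fintype Ω] [DecidableEq Ω] (P : Matrix Ω Ω ℝ) (pi : Ω → ℝ) : Prop :=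
  IsStochastic P ∧ IsIrreducibleMatrix P ∧ IsProbVec pi ∧ pi ᵥ* P = pi

/-- A finite irreducible reversible Markov chain `P` with stationary distribution `pi`. -/
def IsRevMC {Ω : Type*} [Fintype Ω] [DecidableEq Ω] (P : Matrix Ω Ω ℝ) (pi : Ω → ℝ) : Prop :=
  IsMC P pi ∧ IsReversible P pi

/-- Total-variation distance between two measures on a finite set. -/
noncomputable def tvDist {Ω : Type*} [Fintype Ω] (μ ν : Ω → ℝ) : ℝ :=
  (∑ x, |μ x - ν x|) / 2

/-- The lazy version `(I + P)/2` of `P`. -/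
noncomputable def lazyM {Ω : Type*} [Fintype Ω] [DecidableEq Ω] (P : Matrix Ω Ω ℝ) :
    Matrix Ω Ω ℝ :=
  (2 : ℝ)⁻¹ • (1 + P)

/-- `d_c(t, μ)`: TV distance from stationarity of the continuous-time chain at time `t`,
started from `μ`. -/
noncomputable def contDist {Ω : Type*} [Fintype Ω] [DecidableEq Ω] (P : Matrix Ω Ω ℝ) (pi : Ω → ℝ)
    (t : ℝ) (μ : Ω → ℝ) : ℝ :=
  tvDist (fun y => ∑' k : ℕ, Real.exp (-t) * t ^ k / (Nat.factorial k) * (μ ᵥ* (P ^ k)) y) pi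

/-- `d_L(t, μ)`: TV distance from stationarity of the lazy chain at (discrete) time `t`,
started from `μ`. -/
noncomputable def lazyDist {Ω : Type*} [Fintype Ω] [DecidableEq Ω] (P : Matrix Ω Ω ℝ)
    (pi : Ω → ℝ) (t : ℝ) (μ : Ω → ℝ) : ℝ :=
  tvDist (μ ᵥ* (lazyM P ^ ⌊t⌋₊)) pi

/-- `d_ave(t, μ)`: TV distance from stationarity of the averaged chain at (discrete) time `t`,
started from `μ`. -/
noncomputable def aveDist {Ω : Type*} [Fintype Ω] [DecidableEq Ω] (P : Matrix Ω Ω ℝ) (pi : Ω → ℝ)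
    (t : ℝ) (μ : Ω → ℝ) : ℝ :=
  tvDist (fun y => ((μ ᵥ* (P ^ ⌊t⌋₊)) y + (μ ᵥ* (P ^ (⌊t⌋₊ + 1))) y) / 2) pi

/-- The point mass at `x`. -/
noncomputable def deltaMass {Ω : Type*} [DecidableEq Ω] (x : Ω) : Ω → ℝ :=
  fun y => if y = x then 1 else 0

/-- Worst-case continuous-time distance `d_c(t)`. -/
noncomputable def contDistMax {Ω : Type*} [Fintype Ω] [DecidableEq Ω] (P : Matrix Ω Ω ℝ)
    (pi : Ω → ℝ) (t : ℝ) : ℝ :=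
  ⨆ x : Ω, contDist P pi t (deltaMass x)

/-- Worst-case lazy distance `d_L(t)`. -/
noncomputable def lazyDistMax {Ω : Type*} [Fintype Ω] [DecidableEq Ω] (P : Matrix Ω Ω ℝ)
    (pi : Ω → ℝ) (t : ℝ) : ℝ :=
  ⨆ x : Ω, lazyDist P pi t (deltaMass x)

/-- Worst-case averaged distance `d_ave(t)`. -/
noncomputable def aveDistMax {Ω : Type*} [Fintype Ω] [DecidableEq Ω] (P : Matrix Ω Ω ℝ)
    (pi : Ω → ℝ) (t : ℝ) : ℝ :=
  ⨆ x : Ω, aveDist P pi t (deltaMass x)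

/-- `φ_{α,C}(t) = t + ⌈C t^{(1+2α)/2} √(α log t)⌉`. -/
noncomputable def phiAC (α C t : ℝ) : ℝ :=
  t + ((⌈C * t ^ ((1 + 2 * α) / 2) * Real.sqrt (α * Real.log t)⌉ : ℤ) : ℝ)

/-- `ψ_{α,C}(x) = min (1, x + C |log(2x)|^{-α})`. -/
noncomputable def psiAC (α C x : ℝ) : ℝ :=
  min 1 (x + C * |Real.log (2 * x)| ^ (-α))

/-- `t_c(ε)`, the `ε`-mixing time of the continuous-time chain. -/
noncomputable def contMix {Ω : Type*} [Fintype Ω] [DecidableEq Ω] (P : Matrix Ω Ω ℝ)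
    (pi : Ω → ℝ) (ε : ℝ) : ℝ :=
  sInf {t : ℝ | 0 ≤ t ∧ contDistMax P pi t ≤ ε}

/-- `t_L(ε)`, the `ε`-mixing time of the lazy chain. -/
noncomputable def lazyMix {Ω : Type*} [Fintype Ω] [DecidableEq Ω] (P : Matrix Ω Ω ℝ)
    (pi : Ω → ℝ) (ε : ℝ) : ℕ :=
  sInf {t : ℕ | lazyDistMax P pi t ≤ ε}

/-- `t_ave(ε)`, the `ε`-mixing time of the averaged chain. -/
noncomputable def aveMix {Ω : Type*} [Fintype Ω] [DecidableEq Ω] (P : Matrix Ω Ω ℝ)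
    (pi : Ω → ℝ) (ε : ℝ) : ℕ :=
  sInf {t : ℕ | aveDistMax P pi t ≤ ε}

/-- The sequence of continuous-time chains exhibits cutoff. -/
def ContCutoff {Ω : ℕ → Type} [∀ n, Fintype (Ω n)] [∀ n, DecidableEq (Ω n)]
    (P : ∀ n, Matrix (Ω n) (Ω n) ℝ) (pi : ∀ n, Ω n → ℝ) : Prop :=
  ∀ ε : ℝ, 0 < ε → ε < 1 →
    Tendsto (fun n => contMix (P n) (pi n) ε / contMix (P n) (pi n) (1 - ε)) atTop (nhds 1)

/-- The sequence of lazy chains exhibits cutoff. -/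
def LazyCutoff {Ω : ℕ → Type} [∀ n, Fintype (Ω n)] [∀ n, DecidableEq (Ω n)]
    (P : ∀ n, Matrix (Ω n) (Ω n) ℝ) (pi : ∀ n, Ω n → ℝ) : Prop :=
  ∀ ε : ℝ, 0 < ε → ε < 1 →
    Tendsto (fun n => (lazyMix (P n) (pi n) ε : ℝ) / (lazyMix (P n) (pi n) (1 - ε) : ℝ))
      atTop (nhds 1)

/-- The sequence of averaged chains exhibits cutoff. -/
def AveCutoff {Ω : ℕ → Type} [∀ n, Fintype (Ω n)] [∀ n, DecidableEq (Ω n)]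
    (P : ∀ n, Matrix (Ω n) (Ω n) ℝ) (pi : ∀ n, Ω n → ℝ) : Prop :=
  ∀ ε : ℝ, 0 < ε → ε < 1 →
    Tendsto (fun n => (aveMix (P n) (pi n) ε : ℝ) / (aveMix (P n) (pi n) (1 - ε) : ℝ))
      atTop (nhds 1)

/-- The sequence of continuous-time chains exhibits cutoff with window `w`. -/
def ContCutoffWindow {Ω : ℕ → Type} [∀ n, Fintype (Ω n)] [∀ n, DecidableEq (Ω n)]
    (P : ∀ n, Matrix (Ω n) (Ω n) ℝ) (pi : ∀ n, Ω n → ℝ) (w : ℕ → ℝ) : Prop :=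
  ContCutoff P pi ∧
  (fun n => w n) =o[atTop] (fun n => contMix (P n) (pi n) (1 / 4)) ∧
  ∀ ε : ℝ, 0 < ε → ε ≤ 1 / 4 → ∃ Cε : ℝ, 0 < Cε ∧
    ∀ n, contMix (P n) (pi n) ε - contMix (P n) (pi n) (1 - ε) ≤ Cε * w n

/-- The sequence of averaged chains exhibits cutoff with window `w`. -/
def AveCutoffWindow {Ω : ℕ → Type} [∀ n, Fintype (Ω n)] [∀ n, DecidableEq (Ω n)]
    (P : ∀ n, Matrix (Ω n) (Ω n) ℝ) (pi : ∀ n, Ω n → ℝ) (w : ℕ → ℝ) : Prop :=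
  AveCutoff P pi ∧
  (fun n => w n) =o[atTop] (fun n => (aveMix (P n) (pi n) (1 / 4) : ℝ)) ∧
  ∀ ε : ℝ, 0 < ε → ε ≤ 1 / 4 → ∃ Cε : ℝ, 0 < Cε ∧
    ∀ n, (aveMix (P n) (pi n) ε : ℝ) - (aveMix (P n) (pi n) (1 - ε) : ℝ) ≤ Cε * w n

/-!
Run for a Poisson time of mean `r`, the discrete chain becomes the continuous-time chain. Poisson
times have fluctuations of order `√r`, so the two mixing times ought to differ by `O(√t)`; both
directions need a smoothing argument.

From averaged to continuous time, wait until `r - s` is a large multiple of `√s + 1`. By Chebyshev,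
the Poisson time then exceeds `s` with high probability, and a Poisson time and its shift by one are
within `O(1 / √r)` in total variation (Stein–Chen identity and Cauchy–Schwarz), so the average over
two consecutive steps costs nothing.

From continuous to averaged time, reversibility says that the second differences of
`u j = ‖P ^ j f‖²` in `ℓ²(π)` are `‖P ^ j f - P ^ (j + 2) f‖²`. So `u`, its decrements and its
second differences are all nonnegative and nonincreasing, which makes the second differences at
most of order `‖f‖² / j²`. Summing over a window of `O(√r)` consecutive times near a large multiple
of `√r`, the averaged semigroup applied to a test function `f` hardly moves. Its minimum `g` over
the window is therefore close to `f` in `π`-mean, and the continuous-time chain tested on `g` at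
time `r` controls the averaged chain tested on `f` shortly after.

Under averaged cutoff the mixing times tend to infinity, because the averaged mixing time strictly
decreases between levels `1 / 4` and `3 / 4`. The `O(√t)` errors are then negligible against the
mixing times, and are of the order of the second term in the new window.
-/

section Poisson

open MeasureTheory ProbabilityTheory NNReal Set

lemma integrable_of_mem_unitInterval {m : Measure ℕ} [IsFiniteMeasure m] {F : ℕ → ℝ}
    (hF : ∀ k, F k ∈ Icc (0 : ℝ) 1) : Integrable F m :=
  .of_mem_Icc 0 1 .of_discrete (ae_of_all _ hF)

variable {r : ℝ≥0}

lemma poissonWeight_succ_mul (r a : ℝ) (k : ℕ) :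
    Real.exp (-r) * r ^ (k + 1) / (k + 1).factorial * ((k + 1 : ℕ) * a) =
      r * (Real.exp (-r) * r ^ k / k.factorial * a) := by
  rw [Nat.factorial_succ]
  push_cast
  field_simp
  ring

lemma integrable_natCast_mul_poissonMeasure {F : ℕ → ℝ}
    (hF : Integrable (fun k => F (k + 1)) (poissonMeasure r)) :
    Integrable (fun k : ℕ => k * F k) (poissonMeasure r) := by
  rw [integrable_poissonMeasure_iff] at hF ⊢
  refine (_root_.summable_nat_add_iff 1).1 ((hF.mul_left (r : ℝ)).congr fun k => ?_)
  rw [norm_mul, RCLike.norm_natCast, poissonWeight_succ_mul]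

-- The Stein–Chen identity; every moment below is an instance of it.
lemma integral_natCast_mul_poissonMeasure (F : ℕ → ℝ) :
    ∫ k, k * F k ∂poissonMeasure r = r * ∫ k, F (k + 1) ∂poissonMeasure r := by
  let weighted (k : ℕ) : ℝ := Real.exp (-r) * r ^ k / k.factorial * (k * F k)
  have hsupport : Function.support weighted ⊆ range Nat.succ := fun k hk =>
    ⟨k - 1, Nat.succ_pred_eq_of_ne_zero (by rintro rfl; simp [weighted] at hk)⟩
  simp only [integral_poissonMeasure, smul_eq_mul]
  calc ∑' k, weighted k = ∑' k, weighted (k + 1) :=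
        (Nat.succ_injective.tsum_eq hsupport).symm
    _ = ∑' k, r * (Real.exp (-r) * r ^ k / k.factorial * F (k + 1)) :=
        tsum_congr fun k => poissonWeight_succ_mul r (F (k + 1)) k
    _ = _ := tsum_mul_left

lemma integrable_natCast_poissonMeasure :
    Integrable (fun k : ℕ => (k : ℝ)) (poissonMeasure r) := by
  simpa using integrable_natCast_mul_poissonMeasure (F := 1) (integrable_const 1)

lemma integral_natCast_poissonMeasure : ∫ k, (k : ℝ) ∂poissonMeasure r = r := by
  simpa using integral_natCast_mul_poissonMeasure 1

lemma integrable_natCast_sub_poissonMeasure (a : ℝ) :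
    Integrable (fun k : ℕ => (k : ℝ) - a) (poissonMeasure r) :=
  integrable_natCast_poissonMeasure.sub (integrable_const a)

lemma integral_natCast_sub_poissonMeasure (a : ℝ) :
    ∫ k, ((k : ℝ) - a) ∂poissonMeasure r = r - a := by
  rw [integral_sub integrable_natCast_poissonMeasure (integrable_const a),
    integral_natCast_poissonMeasure]
  simp

lemma natCast_succ_sub_eq (k : ℕ) (a : ℝ) : ((k + 1 : ℕ) : ℝ) - a = k - (a - 1) := by
  push_cast
  ring

lemma integrable_natCast_mul_sub_poissonMeasure (a : ℝ) :
    Integrable (fun k : ℕ => k * ((k : ℝ) - a)) (poissonMeasure r) :=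
  integrable_natCast_mul_poissonMeasure <| by
    simpa only [natCast_succ_sub_eq] using integrable_natCast_sub_poissonMeasure (a - 1)

lemma integral_natCast_mul_sub_poissonMeasure (a : ℝ) :
    ∫ k, k * ((k : ℝ) - a) ∂poissonMeasure r = r * (r - (a - 1)) := by
  rw [integral_natCast_mul_poissonMeasure fun k => k - a]
  simp only [natCast_succ_sub_eq, integral_natCast_sub_poissonMeasure]

lemma natCast_sub_sq_eq (k : ℕ) (a : ℝ) : ((k : ℝ) - a) ^ 2 = k * (k - a) - a * (k - a) := by
  ring

lemma integrable_natCast_sub_sq_poissonMeasure :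
    Integrable (fun k : ℕ => ((k : ℝ) - r) ^ 2) (poissonMeasure r) := by
  simp only [natCast_sub_sq_eq]
  exact (integrable_natCast_mul_sub_poissonMeasure _).sub
    ((integrable_natCast_sub_poissonMeasure _).const_mul _)

lemma integral_natCast_sub_sq_poissonMeasure :
    ∫ k, ((k : ℝ) - r) ^ 2 ∂poissonMeasure r = r := by
  simp only [natCast_sub_sq_eq]
  rw [integral_sub (integrable_natCast_mul_sub_poissonMeasure _)
    ((integrable_natCast_sub_poissonMeasure _).const_mul _), integral_const_mul,
    integral_natCast_mul_sub_poissonMeasure, integral_natCast_sub_poissonMeasure]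
  ring

lemma poissonMeasure_real_le_abs_sub {a : ℝ} (ha : 0 < a) :
    (poissonMeasure r).real {k : ℕ | a ≤ |(k : ℝ) - r|} ≤ r / a ^ 2 := by
  have markov := mul_meas_ge_le_integral_of_nonneg
    (ae_of_all (poissonMeasure r) fun k : ℕ => sq_nonneg ((k : ℝ) - r))
    integrable_natCast_sub_sq_poissonMeasure (a ^ 2)
  simp only [integral_natCast_sub_sq_poissonMeasure, sq_le_sq, abs_of_pos ha] at markov
  rwa [le_div_iff₀' (by positivity)]

lemma poissonMeasure_real_Iio_le {s : ℕ} (hs : (s : ℝ) < r) :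
    (poissonMeasure r).real (Iio s) ≤ r / (r - s) ^ 2 := by
  refine (measureReal_mono fun k hk => ?_).trans (poissonMeasure_real_le_abs_sub (sub_pos.2 hs))
  have hk' : (k : ℝ) < s := mod_cast hk
  change (r : ℝ) - s ≤ |(k : ℝ) - r|
  rw [abs_sub_comm]
  exact (sub_le_sub_left hk'.le _).trans (le_abs_self _)

lemma integrable_abs_natCast_sub_poissonMeasure :
    Integrable (fun k : ℕ => |(k : ℝ) - r|) (poissonMeasure r) :=
  (integrable_natCast_sub_poissonMeasure _).abs

lemma integral_abs_natCast_sub_poissonMeasure_le :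
    ∫ k, |(k : ℝ) - r| ∂poissonMeasure r ≤ √(r : ℝ) := by
  have hvar := variance_nonneg (fun k : ℕ => |(k : ℝ) - r|) (poissonMeasure r)
  have hL2 : MemLp (fun k : ℕ => |(k : ℝ) - r|) 2 (poissonMeasure r) := by
    rw [memLp_two_iff_integrable_sq .of_discrete]
    simpa only [sq_abs] using integrable_natCast_sub_sq_poissonMeasure
  rw [variance_eq_sub hL2] at hvar
  simp only [Pi.pow_apply, sq_abs, integral_natCast_sub_sq_poissonMeasure] at hvar
  exact Real.le_sqrt_of_sq_le (by linarith)

lemma integral_succ_sub_integral_poissonMeasure_le (hr : 0 < r) {F : ℕ → ℝ}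
    (hF : ∀ k, F k ∈ Icc (0 : ℝ) 1) :
    ∫ k, F (k + 1) ∂poissonMeasure r - ∫ k, F k ∂poissonMeasure r ≤ 1 / √(r : ℝ) := by
  have hFint : Integrable F (poissonMeasure r) := integrable_of_mem_unitInterval hF
  have hkFint : Integrable (fun k : ℕ => k * F k) (poissonMeasure r) :=
    integrable_natCast_mul_poissonMeasure (integrable_of_mem_unitInterval fun k => hF (k + 1))
  have hle (k : ℕ) : k * F k - r * F k ≤ |(k : ℝ) - r| := by
    rw [← sub_mul]
    exact (mul_le_mul_of_nonneg_right (le_abs_self _) (hF k).1).trans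
      (mul_le_of_le_one_right (abs_nonneg _) (hF k).2)
  have hr' : (0 : ℝ) < r := hr
  rw [← Real.sqrt_div_self', le_div_iff₀' hr']
  calc r * (∫ k, F (k + 1) ∂poissonMeasure r - ∫ k, F k ∂poissonMeasure r)
      = ∫ k, (k * F k - r * F k) ∂poissonMeasure r := by
        rw [integral_sub hkFint (hFint.const_mul _), integral_natCast_mul_poissonMeasure,
          integral_const_mul, mul_sub]
    _ ≤ ∫ k, |(k : ℝ) - r| ∂poissonMeasure r :=
        integral_mono (hkFint.sub (hFint.const_mul _)) integrable_abs_natCast_sub_poissonMeasure hle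
    _ ≤ √(r : ℝ) := integral_abs_natCast_sub_poissonMeasure_le

end Poisson

section TotalVariation

open MeasureTheory Set

variable {Ω : Type*} [Fintype Ω] {μ ν ρ f g : Ω → ℝ}

lemma tvDist_nonneg : 0 ≤ tvDist μ ν :=
  div_nonneg (Finset.sum_nonneg fun _ _ => abs_nonneg _) two_pos.le

lemma tvDist_comm : tvDist μ ν = tvDist ν μ := by
  simp only [tvDist, abs_sub_comm]

lemma tvDist_triangle : tvDist μ ρ ≤ tvDist μ ν + tvDist ν ρ := by
  rw [tvDist, tvDist, tvDist, ← add_div, ← Finset.sum_add_distrib]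
  gcongr
  exact abs_sub_le _ _ _

namespace IsProbVec

lemma nonempty (hμ : IsProbVec μ) : Nonempty Ω := by
  by_contra hempty
  rw [not_nonempty_iff] at hempty
  simpa using hμ.2

lemma dotProduct_one (hμ : IsProbVec μ) : μ ⬝ᵥ 1 = 1 := by
  rw [_root_.dotProduct_one, hμ.2]

lemma dotProduct_mono (hμ : IsProbVec μ) (hfg : f ≤ g) : μ ⬝ᵥ f ≤ μ ⬝ᵥ g :=
  dotProduct_le_dotProduct_of_nonneg_left hfg hμ.1

lemma dotProduct_mem_Icc (hμ : IsProbVec μ) (hf : f ∈ Icc 0 1) : μ ⬝ᵥ f ∈ Icc (0 : ℝ) 1 :=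
  ⟨by simpa using hμ.dotProduct_mono hf.1, hμ.dotProduct_one ▸ hμ.dotProduct_mono hf.2⟩

lemma dotProduct_sub_le_tvDist (hμ : IsProbVec μ) (hν : IsProbVec ν) (hf : f ∈ Icc 0 1) :
    ν ⬝ᵥ f - μ ⬝ᵥ f ≤ tvDist μ ν := by
  have hcenter : ν ⬝ᵥ f - μ ⬝ᵥ f = ∑ x, (ν x - μ x) * (f x - 1 / 2) := by
    simp only [mul_sub, sub_mul, Finset.sum_sub_distrib, ← Finset.sum_mul, hμ.2, hν.2, dotProduct]
    ring
  rw [hcenter, tvDist, Finset.sum_div]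
  refine Finset.sum_le_sum fun x _ => (le_abs_self _).trans ?_
  have hf₀ : 0 ≤ f x := hf.1 x
  have hf₁ : f x ≤ 1 := hf.2 x
  calc |(ν x - μ x) * (f x - 1 / 2)| = |μ x - ν x| * |f x - 1 / 2| := by
        rw [abs_mul, abs_sub_comm]
    _ ≤ |μ x - ν x| * (1 / 2) :=
        mul_le_mul_of_nonneg_left (abs_le.2 ⟨by linarith, by linarith⟩) (abs_nonneg _)
    _ = |μ x - ν x| / 2 := mul_one_div _ _

-- The extremal test function is the indicator of `{μ ≤ ν}`.
lemma tvDist_le_of_dotProduct_sub_le (hμ : IsProbVec μ) (hν : IsProbVec ν) {c : ℝ}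
    (h : ∀ f ∈ Icc (0 : Ω → ℝ) 1, ν ⬝ᵥ f - μ ⬝ᵥ f ≤ c) : tvDist μ ν ≤ c := by
  let f : Ω → ℝ := {x | μ x ≤ ν x}.indicator 1
  have hf : f ∈ Icc 0 1 :=
    ⟨indicator_nonneg fun _ _ => zero_le_one, indicator_le_self' fun _ _ => zero_le_one⟩
  have habs (x : Ω) : |μ x - ν x| = 2 * ((ν x - μ x) * f x) - (ν x - μ x) := by
    rcases le_or_gt (μ x) (ν x) with hx | hx
    · rw [abs_of_nonpos (by linarith), show f x = 1 from indicator_of_mem (by exact hx) _]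
      ring
    · rw [abs_of_pos (by linarith), show f x = 0 from indicator_of_notMem (by simpa using hx) _]
      ring
  refine (Eq.le ?_).trans (h f hf)
  simp only [tvDist, habs, Finset.sum_sub_distrib, ← Finset.mul_sum, hμ.2, hν.2, sub_mul,
    dotProduct]
  ring

lemma tvDist_le_one (hμ : IsProbVec μ) (hν : IsProbVec ν) : tvDist μ ν ≤ 1 :=
  hμ.tvDist_le_of_dotProduct_sub_le hν fun f hf => by
    linarith [(hν.dotProduct_mem_Icc hf).2, (hμ.dotProduct_mem_Icc hf).1]

lemma sub_le_tvDist (hμ : IsProbVec μ) (hν : IsProbVec ν) (x : Ω) : μ x - ν x ≤ tvDist μ ν := by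
  classical
  rw [tvDist_comm]
  simpa using hν.dotProduct_sub_le_tvDist hμ (f := Pi.single x 1)
    ⟨Pi.single_nonneg.2 zero_le_one, fun y => by by_cases hy : y = x <;> simp [hy]⟩

lemma le_one (hμ : IsProbVec μ) (x : Ω) : μ x ≤ 1 :=
  hμ.2 ▸ Finset.single_le_sum (fun y _ => hμ.1 y) (Finset.mem_univ x)

lemma mem_Icc (hμ : IsProbVec μ) (x : Ω) : μ x ∈ Icc (0 : ℝ) 1 := ⟨hμ.1 x, hμ.le_one x⟩

lemma exists_le_half [Nontrivial Ω] (hμ : IsProbVec μ) : ∃ x, μ x ≤ 1 / 2 := by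
  classical
  obtain ⟨a, b, hab⟩ := exists_pair_ne Ω
  have hpair : ∑ x ∈ {a, b}, μ x ≤ ∑ x, μ x :=
    Finset.sum_le_univ_sum_of_nonneg hμ.1
  rw [Finset.sum_pair hab, hμ.2] at hpair
  by_contra! hgt
  linarith [hgt a, hgt b]

end IsProbVec

lemma tvDist_smul_add : tvDist μ ((2 : ℝ)⁻¹ • (μ + ν)) = tvDist μ ν / 2 := by
  have habs (x : Ω) : |μ x - ((2 : ℝ)⁻¹ • (μ + ν)) x| = |μ x - ν x| / 2 := by
    rw [← abs_two, ← abs_div, abs_two, Pi.smul_apply, Pi.add_apply, smul_eq_mul]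
    ring_nf
  simp only [tvDist, habs, Finset.sum_div]

section Mixture

variable {m : Measure ℕ} [IsProbabilityMeasure m] {μ : ℕ → Ω → ℝ}

lemma integral_dotProduct (hμ : ∀ k, IsProbVec (μ k)) (f : Ω → ℝ) :
    (fun x => ∫ k, μ k x ∂m) ⬝ᵥ f = ∫ k, μ k ⬝ᵥ f ∂m := by
  simp only [dotProduct]
  rw [integral_finsetSum _ fun x _ =>
    (integrable_of_mem_unitInterval fun k => (hμ k).mem_Icc x).mul_const _]
  simp only [integral_mul_const]

lemma IsProbVec.integral (hμ : ∀ k, IsProbVec (μ k)) : IsProbVec fun x => ∫ k, μ k x ∂m := by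
  refine ⟨fun x => integral_nonneg fun k => (hμ k).1 x, ?_⟩
  rw [← _root_.dotProduct_one, integral_dotProduct hμ]
  simp [(hμ _).dotProduct_one]

lemma tvDist_integral_le (hμ : ∀ k, IsProbVec (μ k)) (hν : IsProbVec ν) :
    tvDist (fun x => ∫ k, μ k x ∂m) ν ≤ ∫ k, tvDist (μ k) ν ∂m := by
  refine (IsProbVec.integral hμ).tvDist_le_of_dotProduct_sub_le hν fun f hf => ?_
  have hint : Integrable (fun k => μ k ⬝ᵥ f) m :=
    integrable_of_mem_unitInterval fun k => (hμ k).dotProduct_mem_Icc hf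
  calc ν ⬝ᵥ f - (fun x => ∫ k, μ k x ∂m) ⬝ᵥ f = ∫ k, (ν ⬝ᵥ f - μ k ⬝ᵥ f) ∂m := by
        rw [integral_dotProduct hμ, integral_sub (integrable_const _) hint]
        simp
    _ ≤ ∫ k, tvDist (μ k) ν ∂m :=
        integral_mono ((integrable_const _).sub hint)
          (integrable_of_mem_unitInterval fun k => ⟨tvDist_nonneg, (hμ k).tvDist_le_one hν⟩)
          fun k => (hμ k).dotProduct_sub_le_tvDist hν hf

end Mixture

end TotalVariation

section Kernels

open MeasureTheory ProbabilityTheory NNReal Set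

variable {Ω : Type*} [Fintype Ω] {P Q : Matrix Ω Ω ℝ} {μ ν pi f g : Ω → ℝ}

namespace IsStochastic

lemma isProbVec_row (hP : IsStochastic P) (x : Ω) : IsProbVec (P x) := ⟨hP.1 x, hP.2 x⟩

lemma mulVec_mono (hP : IsStochastic P) (hfg : f ≤ g) : P *ᵥ f ≤ P *ᵥ g := fun x =>
  (hP.isProbVec_row x).dotProduct_mono hfg

lemma mulVec_mem_Icc (hP : IsStochastic P) (hf : f ∈ Icc 0 1) : P *ᵥ f ∈ Icc (0 : Ω → ℝ) 1 :=
  ⟨fun x => ((hP.isProbVec_row x).dotProduct_mem_Icc hf).1,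
    fun x => ((hP.isProbVec_row x).dotProduct_mem_Icc hf).2⟩

lemma pow [DecidableEq Ω] (hP : IsStochastic P) (k : ℕ) : IsStochastic (P ^ k) :=
  mem_rowStochastic_iff_sum.1 (pow_mem (mem_rowStochastic_iff_sum.2 hP) k)

lemma mul (hP : IsStochastic P) (hQ : IsStochastic Q) : IsStochastic (P * Q) := by
  classical
  exact mem_rowStochastic_iff_sum.1
    (mul_mem (mem_rowStochastic_iff_sum.2 hP) (mem_rowStochastic_iff_sum.2 hQ))

end IsStochastic

lemma IsProbVec.vecMul (hμ : IsProbVec μ) (hP : IsStochastic P) : IsProbVec (μ ᵥ* P) := by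
  classical
  refine ⟨fun y => Finset.sum_nonneg fun x _ => mul_nonneg (hμ.1 x) (hP.1 x y), ?_⟩
  rw [← _root_.dotProduct_one, ← dotProduct_mulVec,
    one_vecMul_of_mem_rowStochastic (mem_rowStochastic_iff_sum.2 hP), hμ.dotProduct_one]

lemma tvDist_vecMul_le (hμ : IsProbVec μ) (hν : IsProbVec ν) (hP : IsStochastic P) :
    tvDist (μ ᵥ* P) (ν ᵥ* P) ≤ tvDist μ ν :=
  (hμ.vecMul hP).tvDist_le_of_dotProduct_sub_le (hν.vecMul hP) fun f hf => by
    simpa only [dotProduct_mulVec] using hμ.dotProduct_sub_le_tvDist hν (hP.mulVec_mem_Icc hf)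

variable [DecidableEq Ω]

/-- The kernel of the averaged chain at time `k`. -/
noncomputable def avePow (P : Matrix Ω Ω ℝ) (k : ℕ) : Matrix Ω Ω ℝ :=
  (2 : ℝ)⁻¹ • (P ^ k + P ^ (k + 1))

lemma avePow_add_eq_pow_mul (k m : ℕ) : avePow P (k + m) = P ^ k * avePow P m := by
  simp only [avePow, Matrix.mul_smul, mul_add, ← pow_add, add_assoc]

lemma avePow_add_eq_mul_pow (k m : ℕ) : avePow P (k + m) = avePow P k * P ^ m := by
  simp only [avePow, Matrix.smul_mul, add_mul, ← pow_add, add_right_comm]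

lemma vecMul_pow_eq_self (hstat : pi ᵥ* P = pi) (k : ℕ) : pi ᵥ* P ^ k = pi := by
  induction k with
  | zero => simp
  | succ k ih => rw [pow_succ, ← vecMul_vecMul, ih, hstat]

lemma vecMul_avePow_eq_self (hstat : pi ᵥ* P = pi) (k : ℕ) : pi ᵥ* avePow P k = pi := by
  rw [avePow, vecMul_smul, vecMul_add, vecMul_pow_eq_self hstat, vecMul_pow_eq_self hstat,
    ← two_smul ℝ, inv_smul_smul₀ two_ne_zero]

lemma IsStochastic.avePow (hP : IsStochastic P) (k : ℕ) : IsStochastic (avePow P k) :=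
  mem_rowStochastic_iff_sum.1 <| by
    rw [_root_.avePow, smul_add]
    exact convex_rowStochastic (mem_rowStochastic_iff_sum.2 (hP.pow k))
      (mem_rowStochastic_iff_sum.2 (hP.pow (k + 1))) (by positivity) (by positivity) (by norm_num)

lemma avePow_tvDist_antitone (hP : IsStochastic P) (hpi : IsProbVec pi) (hstat : pi ᵥ* P = pi)
    (x : Ω) : Antitone fun k => tvDist (avePow P k x) pi :=
  antitone_nat_of_succ_le fun k => by
    have hstep := tvDist_vecMul_le ((hP.avePow k).isProbVec_row x) hpi hP
    rw [hstat] at hstep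
    rwa [avePow_add_eq_mul_pow, pow_one]

/-- The kernel of the continuous-time chain at time `r`: the power `P ^ N` averaged over a
Poisson time `N` of mean `r`. -/
noncomputable def heatKernel (P : Matrix Ω Ω ℝ) (r : ℝ≥0) : Matrix Ω Ω ℝ :=
  of fun x y => ∫ k, (P ^ k) x y ∂poissonMeasure r

lemma IsStochastic.heatKernel (hP : IsStochastic P) (r : ℝ≥0) : IsStochastic (heatKernel P r) :=
  have hrow (x : Ω) : IsProbVec (_root_.heatKernel P r x) :=
    .integral fun k => (hP.pow k).isProbVec_row x
  ⟨fun x => (hrow x).1, fun x => (hrow x).2⟩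

lemma heatKernel_mulVec_apply (hP : IsStochastic P) (r : ℝ≥0) (f : Ω → ℝ) (x : Ω) :
    (heatKernel P r *ᵥ f) x = ∫ k, (P ^ k *ᵥ f) x ∂poissonMeasure r :=
  integral_dotProduct (fun k => (hP.pow k).isProbVec_row x) f

lemma heatKernel_mul_apply (hP : IsStochastic P) (r : ℝ≥0) (x y : Ω) :
    (heatKernel P r * Q) x y = ∫ k, (P ^ k * Q) x y ∂poissonMeasure r :=
  heatKernel_mulVec_apply hP r (fun z => Q z y) x

lemma tvDist_heatKernel_mul_le (hP : IsStochastic P) {r : ℝ≥0} (hr : 0 < r) (x : Ω) :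
    tvDist (heatKernel P r x) ((heatKernel P r * P) x) ≤ 1 / √(r : ℝ) := by
  have hH := hP.heatKernel r
  refine (hH.isProbVec_row x).tvDist_le_of_dotProduct_sub_le ((hH.mul hP).isProbVec_row x)
    fun f hf => ?_
  have hF (k : ℕ) : (P ^ k *ᵥ f) x ∈ Icc (0 : ℝ) 1 :=
    ((hP.pow k).isProbVec_row x).dotProduct_mem_Icc hf
  calc ((heatKernel P r * P) *ᵥ f) x - (heatKernel P r *ᵥ f) x
      = ∫ k, (P ^ (k + 1) *ᵥ f) x ∂poissonMeasure r - ∫ k, (P ^ k *ᵥ f) x ∂poissonMeasure r := by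
        simp only [← mulVec_mulVec, heatKernel_mulVec_apply hP, pow_succ]
    _ ≤ 1 / √(r : ℝ) := integral_succ_sub_integral_poissonMeasure_le hr hF

lemma integral_tvDist_avePow_le (hP : IsStochastic P) (hpi : IsProbVec pi) (hstat : pi ᵥ* P = pi)
    {r : ℝ≥0} {s : ℕ} (hs : (s : ℝ) < r) (x : Ω) :
    ∫ k, tvDist (avePow P k x) pi ∂poissonMeasure r ≤
      tvDist (avePow P s x) pi + r / (r - s) ^ 2 := by
  have hle_one (k : ℕ) : tvDist (avePow P k x) pi ≤ 1 :=
    ((hP.avePow k).isProbVec_row x).tvDist_le_one hpi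
  have hlate : Integrable ((Iio s).indicator (1 : ℕ → ℝ)) (poissonMeasure r) :=
    (integrable_const 1).indicator .of_discrete
  calc ∫ k, tvDist (avePow P k x) pi ∂poissonMeasure r
      ≤ ∫ k, (tvDist (avePow P s x) pi + (Iio s).indicator 1 k) ∂poissonMeasure r := by
        refine integral_mono (integrable_of_mem_unitInterval fun k => ⟨tvDist_nonneg, hle_one k⟩)
          ((integrable_const _).add hlate) fun k => ?_
        rcases lt_or_ge k s with hk | hk
        · simpa [hk] using (hle_one k).trans (le_add_of_nonneg_left tvDist_nonneg)
        · simpa [hk] using avePow_tvDist_antitone hP hpi hstat x hk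
    _ = tvDist (avePow P s x) pi + (poissonMeasure r).real (Iio s) := by
        rw [integral_add (integrable_const _) hlate, integral_indicator_one .of_discrete]
        simp
    _ ≤ _ := by gcongr; exact poissonMeasure_real_Iio_le hs

theorem tvDist_heatKernel_le (hP : IsStochastic P) (hpi : IsProbVec pi) (hstat : pi ᵥ* P = pi)
    {r : ℝ≥0} {s : ℕ} (hs : (s : ℝ) < r) (x : Ω) :
    tvDist (heatKernel P r x) pi ≤
      tvDist (avePow P s x) pi + r / (r - s) ^ 2 + 1 / √(r : ℝ) := by
  have hr : 0 < r := by exact_mod_cast (Nat.cast_nonneg (α := ℝ) s).trans_lt hs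
  have hsmooth : tvDist (heatKernel P r x) ((heatKernel P r * avePow P 0) x) ≤ 1 / √(r : ℝ) := by
    have hrow : (heatKernel P r * avePow P 0) x =
        (2 : ℝ)⁻¹ • (heatKernel P r x + (heatKernel P r * P) x) := by
      simp [avePow, mul_add]; rfl
    rw [hrow, tvDist_smul_add]
    exact (half_le_self tvDist_nonneg).trans (tvDist_heatKernel_mul_le hP hr x)
  have hmix : tvDist ((heatKernel P r * avePow P 0) x) pi ≤
      ∫ k, tvDist (avePow P k x) pi ∂poissonMeasure r := by
    have hrow : (heatKernel P r * avePow P 0) x =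
        fun y => ∫ k, avePow P k x y ∂poissonMeasure r := by
      ext y
      simp only [heatKernel_mul_apply hP, ← avePow_add_eq_pow_mul, add_zero]
    rw [hrow]
    exact tvDist_integral_le (fun k => (hP.avePow k).isProbVec_row x) hpi
  linarith [tvDist_triangle (μ := heatKernel P r x) (ν := (heatKernel P r * avePow P 0) x)
    (ρ := pi), integral_tvDist_avePow_le hP hpi hstat hs x]

end Kernels

section Reversible

open MeasureTheory ProbabilityTheory NNReal Set

lemma mul_sub_succ_le_of_antitone_sub {u : ℕ → ℝ} (hu : ∀ j, 0 ≤ u j)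
    (hdecr : Antitone fun j => u j - u (j + 1)) (k : ℕ) : k * (u k - u (k + 1)) ≤ u 0 := by
  have hsum : k • (u k - u (k + 1)) ≤ ∑ j ∈ Finset.range k, (u j - u (j + 1)) := by
    simpa using Finset.card_nsmul_le_sum (Finset.range k) _ _ fun j hj =>
      hdecr (Finset.mem_range.1 hj).le
  rw [Finset.sum_range_sub', nsmul_eq_mul] at hsum
  linarith [hu k]

lemma sq_mul_secondDiff_le {u : ℕ → ℝ} (hu : ∀ j, 0 ≤ u j) (hanti : Antitone u)
    (hdecr : Antitone fun j => u j - u (j + 1))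
    (hsecond : Antitone fun j => u j - 2 * u (j + 1) + u (j + 2)) (k : ℕ) :
    (k : ℝ) ^ 2 * (u (2 * k) - 2 * u (2 * k + 1) + u (2 * k + 2)) ≤ u 0 := by
  let b (j : ℕ) : ℝ := u (k + j) - u (k + j + 1)
  have hdiff (j : ℕ) : b j - b (j + 1) = u (k + j) - 2 * u (k + j + 1) + u (k + j + 2) := by
    simp only [b, ← add_assoc]
    ring
  have hb : k * (b k - b (k + 1)) ≤ b 0 :=
    mul_sub_succ_le_of_antitone_sub (fun j => sub_nonneg.2 (hanti (Nat.le_succ _)))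
      (fun i j hij => by
        change b j - b (j + 1) ≤ b i - b (i + 1)
        rw [hdiff, hdiff]
        exact hsecond (Nat.add_le_add_left hij k)) k
  calc (k : ℝ) ^ 2 * (u (2 * k) - 2 * u (2 * k + 1) + u (2 * k + 2))
      = k * (k * (b k - b (k + 1))) := by rw [hdiff, ← two_mul]; ring
    _ ≤ k * b 0 := by gcongr
    _ ≤ u 0 := mul_sub_succ_le_of_antitone_sub hu hdecr k

variable {Ω : Type*} [Fintype Ω] {P : Matrix Ω Ω ℝ} {pi f g : Ω → ℝ}

lemma IsProbVec.sq_dotProduct_le (hpi : IsProbVec pi) (f : Ω → ℝ) :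
    (pi ⬝ᵥ f) ^ 2 ≤ pi ⬝ᵥ f ^ 2 :=
  Real.pow_arith_mean_le_arith_mean_pow_of_even _ _ _ (fun x _ => hpi.1 x) hpi.2 even_two

lemma dotProduct_mulVec_sq_le (hP : IsStochastic P) (hpi : IsProbVec pi) (hstat : pi ᵥ* P = pi)
    (f : Ω → ℝ) : pi ⬝ᵥ (P *ᵥ f) ^ 2 ≤ pi ⬝ᵥ f ^ 2 :=
  calc pi ⬝ᵥ (P *ᵥ f) ^ 2 ≤ pi ⬝ᵥ (P *ᵥ f ^ 2) :=
        hpi.dotProduct_mono fun x => (hP.isProbVec_row x).sq_dotProduct_le f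
    _ = pi ⬝ᵥ f ^ 2 := by rw [dotProduct_mulVec, hstat]

lemma IsReversible.dotProduct_mul_mulVec (hrev : IsReversible P pi) (f g : Ω → ℝ) :
    pi ⬝ᵥ (f * (P *ᵥ g)) = pi ⬝ᵥ ((P *ᵥ f) * g) := by
  simp only [dotProduct, Pi.mul_apply, mulVec, Finset.mul_sum, Finset.sum_mul]
  rw [Finset.sum_comm]
  refine Finset.sum_congr rfl fun x _ => Finset.sum_congr rfl fun y _ => ?_
  linear_combination -(f y * g x) * hrev x y

lemma IsReversible.dotProduct_sub_mulVec_mulVec_sq (hrev : IsReversible P pi) (f : Ω → ℝ) :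
    pi ⬝ᵥ (f - P *ᵥ P *ᵥ f) ^ 2 =
      pi ⬝ᵥ f ^ 2 - 2 * pi ⬝ᵥ (P *ᵥ f) ^ 2 + pi ⬝ᵥ (P *ᵥ P *ᵥ f) ^ 2 := by
  have hexpand : (f - P *ᵥ P *ᵥ f) ^ 2 =
      f ^ 2 - (2 : ℝ) • (f * (P *ᵥ P *ᵥ f)) + (P *ᵥ P *ᵥ f) ^ 2 := by
    rw [sub_sq, mul_assoc, ofNat_smul_eq_nsmul, nsmul_eq_mul, Nat.cast_ofNat]
  rw [hexpand, dotProduct_add, dotProduct_sub, dotProduct_smul, hrev.dotProduct_mul_mulVec,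
    ← sq, smul_eq_mul]

variable [DecidableEq Ω]

lemma pow_succ_mulVec (P : Matrix Ω Ω ℝ) (k : ℕ) (f : Ω → ℝ) :
    P ^ (k + 1) *ᵥ f = P *ᵥ P ^ k *ᵥ f := by
  rw [pow_succ', mulVec_mulVec]

lemma sq_mul_dotProduct_pow_sub_sq_le (hP : IsStochastic P) (hpi : IsProbVec pi)
    (hstat : pi ᵥ* P = pi) (hrev : IsReversible P pi) (f : Ω → ℝ) {k m : ℕ} (hm : 2 * k ≤ m) :
    (k : ℝ) ^ 2 * pi ⬝ᵥ (P ^ m *ᵥ f - P ^ (m + 2) *ᵥ f) ^ 2 ≤ pi ⬝ᵥ f ^ 2 := by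
  let u (j : ℕ) : ℝ := pi ⬝ᵥ (P ^ j *ᵥ f) ^ 2
  have hsecond (j : ℕ) : pi ⬝ᵥ (P ^ j *ᵥ f - P ^ (j + 2) *ᵥ f) ^ 2 =
      u j - 2 * u (j + 1) + u (j + 2) := by
    simp only [u, pow_succ_mulVec, hrev.dotProduct_sub_mulVec_mulVec_sq]
  have hnonneg (h : Ω → ℝ) : 0 ≤ pi ⬝ᵥ h ^ 2 :=
    dotProduct_nonneg_of_nonneg hpi.1 fun x => sq_nonneg (h x)
  have hu_anti : Antitone u := antitone_nat_of_succ_le fun j => by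
    simpa only [u, pow_succ_mulVec] using dotProduct_mulVec_sq_le hP hpi hstat (P ^ j *ᵥ f)
  have hu_decr : Antitone fun j => u j - u (j + 1) := antitone_nat_of_succ_le fun j => by
    linarith [hsecond j, hnonneg (P ^ j *ᵥ f - P ^ (j + 2) *ᵥ f)]
  have hdiff_anti : Antitone fun j => pi ⬝ᵥ (P ^ j *ᵥ f - P ^ (j + 2) *ᵥ f) ^ 2 :=
    antitone_nat_of_succ_le fun j => by
      simpa only [mulVec_sub, pow_succ_mulVec] using
        dotProduct_mulVec_sq_le hP hpi hstat (P ^ j *ᵥ f - P ^ (j + 2) *ᵥ f)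
  calc (k : ℝ) ^ 2 * pi ⬝ᵥ (P ^ m *ᵥ f - P ^ (m + 2) *ᵥ f) ^ 2
      ≤ (k : ℝ) ^ 2 * (u (2 * k) - 2 * u (2 * k + 1) + u (2 * k + 2)) := by
        rw [← hsecond]
        exact mul_le_mul_of_nonneg_left (hdiff_anti hm) (sq_nonneg _)
    _ ≤ u 0 := sq_mul_secondDiff_le (fun j => hnonneg _) hu_anti hu_decr
        (by simpa only [hsecond] using hdiff_anti) k
    _ = pi ⬝ᵥ f ^ 2 := by simp only [u, pow_zero, one_mulVec]

lemma dotProduct_abs_avePow_sub_le (hP : IsStochastic P) (hpi : IsProbVec pi)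
    (hstat : pi ᵥ* P = pi) (hrev : IsReversible P pi) (hf : f ∈ Icc 0 1) {K m : ℕ} (hK : 0 < K)
    (hm : 2 * K ≤ m) :
    pi ⬝ᵥ |avePow P m *ᵥ f - avePow P (m + 1) *ᵥ f| ≤ 1 / (2 * K) := by
  let d : Ω → ℝ := P ^ m *ᵥ f - P ^ (m + 2) *ᵥ f
  have htelescope : avePow P m *ᵥ f - avePow P (m + 1) *ᵥ f = (2 : ℝ)⁻¹ • d := by
    simp only [avePow, d, smul_mulVec, ← smul_sub, add_mulVec, add_assoc, Nat.reduceAdd]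
    congr 1
    abel
  have habs : |(2 : ℝ)⁻¹ • d| = (2 : ℝ)⁻¹ • |d| := funext fun x => by
    simp [abs_mul]
  have hd_sq : |d| ^ 2 = d ^ 2 := funext fun x => sq_abs (d x)
  have hf_sq : pi ⬝ᵥ f ^ 2 ≤ 1 :=
    (hpi.dotProduct_mono (pow_le_one₀ hf.1 hf.2)).trans_eq hpi.dotProduct_one
  have hL1 : (K * pi ⬝ᵥ |d|) ^ 2 ≤ 1 ^ 2 := by
    calc (K * pi ⬝ᵥ |d|) ^ 2 = (K : ℝ) ^ 2 * (pi ⬝ᵥ |d|) ^ 2 := mul_pow _ _ _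
      _ ≤ (K : ℝ) ^ 2 * pi ⬝ᵥ d ^ 2 := by
        gcongr
        exact hd_sq ▸ hpi.sq_dotProduct_le |d|
      _ ≤ pi ⬝ᵥ f ^ 2 := sq_mul_dotProduct_pow_sub_sq_le hP hpi hstat hrev f hm
      _ ≤ 1 ^ 2 := by rwa [one_pow]
  have hK' : (0 : ℝ) < K := mod_cast hK
  rw [htelescope, habs, dotProduct_smul, smul_eq_mul, le_div_iff₀ (mul_pos two_pos hK')]
  linarith [le_of_sq_le_sq hL1 zero_le_one]

/-- The pointwise minimum of the averaged semigroup `A_i f` over the time window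
`a ≤ i ≤ a + n`. -/
noncomputable def aveWindowInf (P : Matrix Ω Ω ℝ) (f : Ω → ℝ) (a n : ℕ) : Ω → ℝ :=
  (Finset.Icc a (a + n)).inf' (Finset.nonempty_Icc.2 (Nat.le_add_right a n))
    fun i => avePow P i *ᵥ f

lemma aveWindowInf_le {a n i : ℕ} (hi : i ∈ Finset.Icc a (a + n)) :
    aveWindowInf P f a n ≤ avePow P i *ᵥ f :=
  Finset.inf'_le _ hi

lemma aveWindowInf_mem_Icc (hP : IsStochastic P) (hf : f ∈ Icc 0 1) (a n : ℕ) :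
    aveWindowInf P f a n ∈ Icc (0 : Ω → ℝ) 1 :=
  ⟨Finset.le_inf' _ _ fun i _ => ((hP.avePow i).mulVec_mem_Icc hf).1,
    (aveWindowInf_le (Finset.left_mem_Icc.2 (Nat.le_add_right a n))).trans
      ((hP.avePow a).mulVec_mem_Icc hf).2⟩

lemma avePow_mulVec_le_aveWindowInf_add_sum (P : Matrix Ω Ω ℝ) (f : Ω → ℝ) (a n : ℕ) :
    avePow P a *ᵥ f ≤ aveWindowInf P f a n +
      ∑ i ∈ Finset.Ico a (a + n), |avePow P i *ᵥ f - avePow P (i + 1) *ᵥ f| := by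
  rw [← sub_le_iff_le_add]
  refine Finset.le_inf' _ _ fun j hj => ?_
  obtain ⟨haj, hjn⟩ := Finset.mem_Icc.1 hj
  rw [sub_le_comm, ← neg_sub, ← Finset.sum_Ico_sub (fun i => avePow P i *ᵥ f) haj,
    ← Finset.sum_neg_distrib]
  simp only [neg_sub]
  exact (Finset.sum_le_sum fun i _ => le_abs_self _).trans
    (Finset.sum_le_sum_of_subset_of_nonneg (Finset.Ico_subset_Ico_right hjn)
      fun _ _ _ => abs_nonneg _)

lemma dotProduct_le_dotProduct_aveWindowInf_add (hP : IsStochastic P) (hpi : IsProbVec pi)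
    (hstat : pi ᵥ* P = pi) (hrev : IsReversible P pi) (hf : f ∈ Icc 0 1) {K : ℕ} (hK : 0 < K)
    (n : ℕ) : pi ⬝ᵥ f ≤ pi ⬝ᵥ aveWindowInf P f (2 * K) n + n / (2 * K) := by
  let step (i : ℕ) : Ω → ℝ := |avePow P i *ᵥ f - avePow P (i + 1) *ᵥ f|
  have hvariation : pi ⬝ᵥ ∑ i ∈ Finset.Ico (2 * K) (2 * K + n), step i ≤ n / (2 * K) := by
    rw [dotProduct_sum]
    refine (Finset.sum_le_card_nsmul _ _ (1 / (2 * (K : ℝ))) fun i hi =>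
      dotProduct_abs_avePow_sub_le hP hpi hstat hrev hf hK (Finset.mem_Ico.1 hi).1).trans_eq ?_
    rw [Nat.card_Ico, nsmul_eq_mul, Nat.add_sub_cancel_left, mul_one_div]
  calc pi ⬝ᵥ f = pi ⬝ᵥ (avePow P (2 * K) *ᵥ f) := by
        rw [dotProduct_mulVec, vecMul_avePow_eq_self hstat]
    _ ≤ pi ⬝ᵥ (aveWindowInf P f (2 * K) n + ∑ i ∈ Finset.Ico (2 * K) (2 * K + n), step i) :=
        hpi.dotProduct_mono (avePow_mulVec_le_aveWindowInf_add_sum P f _ n)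
    _ ≤ pi ⬝ᵥ aveWindowInf P f (2 * K) n + n / (2 * K) := by
        rw [dotProduct_add]
        gcongr

lemma pow_mulVec_aveWindowInf_le (hP : IsStochastic P) {a n k s : ℕ} (hs : k + a ≤ s)
    (hsn : s ≤ k + (a + n)) : P ^ k *ᵥ aveWindowInf P f a n ≤ avePow P s *ᵥ f := by
  obtain ⟨i, rfl⟩ := Nat.exists_eq_add_of_le ((Nat.le_add_right k a).trans hs)
  rw [avePow_add_eq_pow_mul, ← mulVec_mulVec]
  exact (hP.pow k).mulVec_mono (aveWindowInf_le (Finset.mem_Icc.2 ⟨by omega, by omega⟩))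

lemma floor_lt_add_of_abs_sub_lt {r : ℝ≥0} {k J : ℕ} (h : |(k : ℝ) - r| < J) :
    ⌊r⌋₊ < k + J ∧ k < ⌊r⌋₊ + 1 + J := by
  have hfloor : (⌊r⌋₊ : ℝ) ≤ r := Nat.floor_le r.2
  have hfloor' : (r : ℝ) < ⌊r⌋₊ + 1 := Nat.lt_floor_add_one (r : ℝ)
  obtain ⟨hlower, hupper⟩ := abs_lt.1 h
  refine ⟨?_, ?_⟩ <;> rify <;> linarith

lemma heatKernel_mulVec_aveWindowInf_le (hP : IsStochastic P) (hf : f ∈ Icc 0 1) (r : ℝ≥0)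
    (a : ℕ) {J : ℕ} (hJ : 0 < J) (x : Ω) :
    (heatKernel P r *ᵥ aveWindowInf P f a (2 * J)) x ≤
      (avePow P (⌊r⌋₊ + (a + J)) *ᵥ f) x + r / J ^ 2 := by
  set s := ⌊r⌋₊ + (a + J)
  set g := aveWindowInf P f a (2 * J)
  let far : Set ℕ := {k | (J : ℝ) ≤ |(k : ℝ) - r|}
  have hg (k : ℕ) : (P ^ k *ᵥ g) x ∈ Icc (0 : ℝ) 1 :=
    ((hP.pow k).isProbVec_row x).dotProduct_mem_Icc (aveWindowInf_mem_Icc hP hf _ _)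
  have hfar : Integrable (far.indicator (1 : ℕ → ℝ)) (poissonMeasure r) :=
    (integrable_const 1).indicator .of_discrete
  have hpointwise (k : ℕ) : (P ^ k *ᵥ g) x ≤ (avePow P s *ᵥ f) x + far.indicator 1 k := by
    by_cases hk : k ∈ far
    · simpa [hk] using (hg k).2.trans
        (le_add_of_nonneg_left (((hP.avePow s).mulVec_mem_Icc hf).1 x))
    · have hnear : |(k : ℝ) - r| < J := not_le.1 hk
      obtain ⟨hrk, hkr⟩ := floor_lt_add_of_abs_sub_lt hnear
      have hlower : k + a ≤ s := show k + a ≤ ⌊r⌋₊ + (a + J) by omega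
      have hupper : s ≤ k + (a + 2 * J) := show ⌊r⌋₊ + (a + J) ≤ k + (a + 2 * J) by omega
      simpa [hk] using pow_mulVec_aveWindowInf_le (f := f) hP hlower hupper x
  calc (heatKernel P r *ᵥ g) x = ∫ k, (P ^ k *ᵥ g) x ∂poissonMeasure r :=
        heatKernel_mulVec_apply hP r g x
    _ ≤ ∫ k, ((avePow P s *ᵥ f) x + far.indicator 1 k) ∂poissonMeasure r :=
        integral_mono (integrable_of_mem_unitInterval hg) ((integrable_const _).add hfar)
          hpointwise
    _ = (avePow P s *ᵥ f) x + (poissonMeasure r).real far := by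
        rw [integral_add (integrable_const _) hfar, integral_indicator_one .of_discrete]
        simp
    _ ≤ (avePow P s *ᵥ f) x + r / J ^ 2 := by
        gcongr
        exact poissonMeasure_real_le_abs_sub (mod_cast hJ)

theorem tvDist_avePow_le (hP : IsStochastic P) (hpi : IsProbVec pi) (hstat : pi ᵥ* P = pi)
    (hrev : IsReversible P pi) (r : ℝ≥0) {J K : ℕ} (hJ : 0 < J) (hK : 0 < K) (x : Ω) :
    tvDist (avePow P (⌊r⌋₊ + (2 * K + J)) x) pi ≤
      tvDist (heatKernel P r x) pi + r / J ^ 2 + J / K := by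
  refine ((hP.avePow _).isProbVec_row x).tvDist_le_of_dotProduct_sub_le hpi fun f hf => ?_
  have hwindow := dotProduct_le_dotProduct_aveWindowInf_add hP hpi hstat hrev hf hK (2 * J)
  have htv : _ - (heatKernel P r *ᵥ aveWindowInf P f (2 * K) (2 * J)) x ≤ _ :=
    ((hP.heatKernel r).isProbVec_row x).dotProduct_sub_le_tvDist hpi
      (aveWindowInf_mem_Icc hP hf (2 * K) (2 * J))
  have hheat := heatKernel_mulVec_aveWindowInf_le hP hf r (2 * K) hJ x
  change pi ⬝ᵥ f - (avePow P _ *ᵥ f) x ≤ _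
  rw [Nat.cast_mul, Nat.cast_two, mul_div_mul_left _ _ two_ne_zero] at hwindow
  linarith

end Reversible

section Convergence

open NNReal Topology

variable {Ω : Type*} [Fintype Ω] {P : Matrix Ω Ω ℝ} {pi μ ν : Ω → ℝ}

lemma eq_of_tvDist_le_zero (h : tvDist μ ν ≤ 0) : μ = ν := by
  have hsum : ∑ x, |μ x - ν x| = 0 := by
    have h' : (∑ x, |μ x - ν x|) / 2 = 0 := le_antisymm h tvDist_nonneg
    linarith
  ext x
  have hx := (Finset.sum_eq_zero_iff_of_nonneg fun y _ => abs_nonneg _).1 hsum x (Finset.mem_univ x)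
  exact sub_eq_zero.1 (abs_eq_zero.1 hx)

lemma continuous_tvDist {X : Type*} [TopologicalSpace X] {F G : X → Ω → ℝ} (hF : Continuous F)
    (hG : Continuous G) : Continuous fun a => tvDist (F a) (G a) := by
  unfold tvDist
  fun_prop

variable [DecidableEq Ω]

lemma eq_zero_of_stationary_of_apply_eq_zero (hP : IsStochastic P) (hirr : IsIrreducibleMatrix P)
    (hμ : 0 ≤ μ) (hstat : μ ᵥ* P = μ) {x : Ω} (hx : μ x = 0) : μ = 0 := by
  ext y
  obtain ⟨n, hn⟩ := hirr y x
  have hsum : ∑ z, μ z * (P ^ n) z x = 0 :=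
    (congrFun (vecMul_pow_eq_self hstat n) x).trans hx
  have hterm := (Finset.sum_eq_zero_iff_of_nonneg fun z _ =>
    mul_nonneg (hμ z) ((hP.pow n).1 z x)).1 hsum y (Finset.mem_univ y)
  exact (mul_eq_zero.1 hterm).resolve_right hn.ne'

lemma IsProbVec.pos_of_stationary (hpi : IsProbVec pi) (hP : IsStochastic P)
    (hirr : IsIrreducibleMatrix P) (hstat : pi ᵥ* P = pi) (x : Ω) : 0 < pi x :=
  (hpi.1 x).lt_of_ne' fun hx => by
    have hpi_zero : pi = 0 := eq_zero_of_stationary_of_apply_eq_zero hP hirr hpi.1 hstat hx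
    simpa [hpi_zero] using hpi.2

lemma IsProbVec.eq_of_stationary (hpi : IsProbVec pi) (hμ : IsProbVec μ) (hP : IsStochastic P)
    (hirr : IsIrreducibleMatrix P) (hpi_stat : pi ᵥ* P = pi) (hμ_stat : μ ᵥ* P = μ) : μ = pi := by
  have hpos := hpi.pos_of_stationary hP hirr hpi_stat
  have := hpi.nonempty
  obtain ⟨x, hx⟩ := Finite.exists_min fun y => μ y / pi y
  set c := μ x / pi x
  have hprop : μ - c • pi = 0 := by
    refine eq_zero_of_stationary_of_apply_eq_zero hP hirr (fun y => ?_) ?_ (x := x) ?_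
    · simpa using (le_div_iff₀ (hpos y)).1 (hx y)
    · rw [sub_vecMul, smul_vecMul, hμ_stat, hpi_stat]
    · simp [c, (hpos x).ne']
  have hμ_eq : μ = c • pi := sub_eq_zero.1 hprop
  have hc : c = 1 := by simpa [hμ_eq, ← Finset.mul_sum, hpi.2] using hμ.2
  rw [hμ_eq, hc, one_smul]

-- By compactness it suffices to identify the limit points, and these are stationary because one
-- more step of `P` moves `heatKernel P r x` by at most `1 / √r`.
theorem tendsto_heatKernel_apply (hP : IsStochastic P) (hirr : IsIrreducibleMatrix P)
    (hpi : IsProbVec pi) (hstat : pi ᵥ* P = pi) (x : Ω) :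
    Tendsto (fun r => heatKernel P r x) atTop (𝓝 pi) := by
  have hone_step : Tendsto (fun r => tvDist (heatKernel P r x) (heatKernel P r x ᵥ* P)) atTop
      (𝓝 0) := by
    refine squeeze_zero' (Eventually.of_forall fun r => tvDist_nonneg)
      ((eventually_gt_atTop 0).mono fun r hr => tvDist_heatKernel_mul_le hP hr x) ?_
    exact tendsto_const_nhds.div_atTop
      (Real.tendsto_sqrt_atTop.comp (NNReal.tendsto_coe_atTop.2 tendsto_id))
  refine (isCompact_stdSimplex ℝ Ω).tendsto_nhds_of_unique_mapClusterPt
    (Eventually.of_forall fun r => (hP.heatKernel r).isProbVec_row x) fun μ hμ hcluster => ?_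
  have hcont : Continuous fun ν : Ω → ℝ => tvDist ν (ν ᵥ* P) :=
    continuous_tvDist continuous_id (continuous_id.matrix_vecMul continuous_const)
  have hzero : tvDist μ (μ ᵥ* P) = 0 :=
    eq_of_nhds_neBot <| .mono (hcluster.continuousAt_comp hcont.continuousAt)
      (inf_le_inf_left _ hone_step)
  exact hpi.eq_of_stationary hμ hP hirr hstat (eq_of_tvDist_le_zero hzero.le).symm

lemma tendsto_tvDist_heatKernel (hP : IsStochastic P) (hirr : IsIrreducibleMatrix P)
    (hpi : IsProbVec pi) (hstat : pi ᵥ* P = pi) (x : Ω) :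
    Tendsto (fun r => tvDist (heatKernel P r x) pi) atTop (𝓝 0) := by
  have hself : tvDist pi pi = 0 := by simp [tvDist]
  rw [← hself]
  exact ((continuous_tvDist continuous_id continuous_const).tendsto pi).comp
    (tendsto_heatKernel_apply hP hirr hpi hstat x)

end Convergence

section MixingTimes

open MeasureTheory ProbabilityTheory NNReal

variable {Ω : Type*} [Fintype Ω] [DecidableEq Ω] {P : Matrix Ω Ω ℝ} {pi : Ω → ℝ} {ε δ η : ℝ}

lemma deltaMass_vecMul (x : Ω) (P : Matrix Ω Ω ℝ) : deltaMass x ᵥ* P = P x := by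
  ext y
  simp [deltaMass, vecMul, dotProduct]

lemma contDist_deltaMass (P : Matrix Ω Ω ℝ) (pi : Ω → ℝ) (r : ℝ≥0) (x : Ω) :
    contDist P pi r (deltaMass x) = tvDist (heatKernel P r x) pi := by
  simp only [contDist, deltaMass_vecMul]
  congr with y
  exact (integral_poissonMeasure r fun k => (P ^ k) x y).symm

lemma aveDist_deltaMass (P : Matrix Ω Ω ℝ) (pi : Ω → ℝ) (k : ℕ) (x : Ω) :
    aveDist P pi k (deltaMass x) = tvDist (avePow P k x) pi := by
  simp only [aveDist, deltaMass_vecMul, Nat.floor_natCast]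
  congr with y
  simp [avePow, div_eq_inv_mul, mul_add]

lemma contDistMax_le_iff [Nonempty Ω] {r : ℝ≥0} :
    contDistMax P pi r ≤ ε ↔ ∀ x, tvDist (heatKernel P r x) pi ≤ ε := by
  simp only [contDistMax, contDist_deltaMass, ciSup_le_iff (Set.finite_range _).bddAbove]

lemma aveDistMax_le_iff [Nonempty Ω] {k : ℕ} :
    aveDistMax P pi k ≤ ε ↔ ∀ x, tvDist (avePow P k x) pi ≤ ε := by
  simp only [aveDistMax, aveDist_deltaMass, ciSup_le_iff (Set.finite_range _).bddAbove]

lemma bddBelow_contMix (P : Matrix Ω Ω ℝ) (pi : Ω → ℝ) (ε : ℝ) :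
    BddBelow {t : ℝ | 0 ≤ t ∧ contDistMax P pi t ≤ ε} :=
  ⟨0, fun _ ht => ht.1⟩

lemma contMix_nonneg : 0 ≤ contMix P pi ε := Real.sInf_nonneg fun _ ht => ht.1

lemma contMix_le [Nonempty Ω] {r : ℝ≥0} (hr : ∀ x, tvDist (heatKernel P r x) pi ≤ ε) :
    contMix P pi ε ≤ r :=
  csInf_le (bddBelow_contMix P pi ε) ⟨r.2, contDistMax_le_iff.2 hr⟩

lemma aveMix_le [Nonempty Ω] {k : ℕ} (hk : ∀ x, tvDist (avePow P k x) pi ≤ ε) :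
    aveMix P pi ε ≤ k :=
  Nat.sInf_le (aveDistMax_le_iff.2 hk)

namespace IsMC

lemma exists_forall_tvDist_heatKernel_le (h : IsMC P pi) (hε : 0 < ε) :
    ∃ r : ℝ≥0, ∀ x, tvDist (heatKernel P r x) pi ≤ ε :=
  have hmixed : ∀ᶠ r in atTop, ∀ x, tvDist (heatKernel P r x) pi ≤ ε :=
    eventually_all.2 fun x =>
      (tendsto_tvDist_heatKernel h.1 h.2.1 h.2.2.1 h.2.2.2 x).eventually_le_const hε
  hmixed.exists

lemma le_map_contMix (h : IsMC P pi) (hε : 0 < ε) {φ : ℝ → ℝ} (hcont : Continuous φ)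
    (hmono : Monotone φ) {a : ℝ}
    (ha : ∀ r : ℝ≥0, (∀ x, tvDist (heatKernel P r x) pi ≤ ε) → a ≤ φ r) :
    a ≤ φ (contMix P pi ε) := by
  have := h.2.2.1.nonempty
  obtain ⟨r, hr⟩ := h.exists_forall_tvDist_heatKernel_le hε
  have hne : {t : ℝ | 0 ≤ t ∧ contDistMax P pi t ≤ ε}.Nonempty :=
    ⟨r, r.2, contDistMax_le_iff.2 hr⟩
  rw [contMix, hmono.map_csInf_of_continuousAt hcont.continuousAt hne (bddBelow_contMix P pi ε)]
  refine le_csInf (hne.image φ) ?_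
  rintro _ ⟨t, ⟨ht, htε⟩, rfl⟩
  lift t to ℝ≥0 using ht
  exact ha t (contDistMax_le_iff.1 htε)

lemma le_contMix (h : IsMC P pi) (hε : 0 < ε) {a : ℝ}
    (ha : ∀ r : ℝ≥0, (∀ x, tvDist (heatKernel P r x) pi ≤ ε) → a ≤ r) : a ≤ contMix P pi ε :=
  h.le_map_contMix hε continuous_id monotone_id ha

lemma contMix_anti (h : IsMC P pi) (hε : 0 < ε) (hεη : ε ≤ η) :
    contMix P pi η ≤ contMix P pi ε :=
  have := h.2.2.1.nonempty
  h.le_contMix hε fun _ hr => contMix_le fun x => (hr x).trans hεη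

end IsMC

lemma contMix_eq_zero_of_subsingleton [Subsingleton Ω] (hP : IsStochastic P)
    (hpi : IsProbVec pi) (hε : 0 ≤ ε) : contMix P pi ε = 0 := by
  have := hpi.nonempty
  refine le_antisymm (contMix_le (r := 0) fun x => ?_) contMix_nonneg
  have : Unique Ω := uniqueOfSubsingleton x
  have hH := (hP.heatKernel 0).2 x
  have hpi_sum := hpi.2
  rw [Fintype.sum_unique] at hH hpi_sum
  simpa [tvDist, hH, hpi_sum] using hε

lemma exp_neg_le_heatKernel_self (hP : IsStochastic P) (r : ℝ≥0) (x : Ω) :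
    Real.exp (-r) ≤ heatKernel P r x x := by
  have hentry (k : ℕ) : (P ^ k) x x ∈ Set.Icc (0 : ℝ) 1 := ((hP.pow k).isProbVec_row x).mem_Icc x
  change _ ≤ ∫ k, (P ^ k) x x ∂poissonMeasure r
  simpa using le_hasSum
    (hasSum_integral_poissonMeasure (r := r) (integrable_of_mem_unitInterval hentry)) 0
    fun k _ => mul_nonneg (by positivity) (hentry k).1

lemma IsMC.half_sub_le_contMix [Nontrivial Ω] (h : IsMC P pi) (hε : 0 < ε) :
    1 / 2 - ε ≤ contMix P pi ε := by
  obtain ⟨x, hx⟩ := h.2.2.1.exists_le_half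
  refine h.le_contMix hε fun r hr => ?_
  have htv := ((h.1.heatKernel r).isProbVec_row x).sub_le_tvDist h.2.2.1 x
  linarith [hr x, exp_neg_le_heatKernel_self h.1 r x, Real.add_one_le_exp (-(r : ℝ))]

lemma IsMC.subsingleton_of_contMix_eq_zero (h : IsMC P pi) (hε : 0 < ε) (hε' : ε < 1 / 2)
    (hzero : contMix P pi ε = 0) : Subsingleton Ω := by
  by_contra hsub
  rw [not_subsingleton_iff_nontrivial] at hsub
  linarith [h.half_sub_le_contMix hε]

lemma one_div_le_half (hδ : 0 < δ) {b : ℝ} (hb : 2 / δ ≤ b) : 1 / b ≤ δ / 2 :=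
  (one_div_le_one_div_of_le (by positivity) hb).trans_eq (one_div_div _ _)

lemma div_sq_le_half (hδ : 0 < δ) (hδ' : δ ≤ 1) {a b c : ℝ} (ha : 0 < a) (hc : c ≤ a ^ 2)
    (hb : 2 / δ * a ≤ b) : c / b ^ 2 ≤ δ / 2 :=
  calc c / b ^ 2 ≤ a ^ 2 / (2 / δ * a) ^ 2 := by gcongr
    _ = δ ^ 2 / 4 := by field_simp; norm_num
    _ ≤ δ / 2 := by nlinarith

lemma natCast_ceil_two_div_mul_le (hδ : 0 < δ) (hδ' : δ ≤ 1) {a : ℝ} (ha : 1 ≤ a) :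
    (⌈2 / δ * a⌉₊ : ℝ) ≤ 3 / δ * a := by
  have hone : 1 ≤ 1 / δ * a := one_le_mul_of_one_le_of_one_le (one_le_one_div hδ hδ') ha
  have hsplit : 3 / δ * a = 2 / δ * a + 1 / δ * a := by ring
  linarith [Nat.ceil_lt_add_one (show 0 ≤ 2 / δ * a by positivity)]

theorem exists_tvDist_heatKernel_le_add (hP : IsStochastic P) (hpi : IsProbVec pi)
    (hstat : pi ᵥ* P = pi) (hδ : 0 < δ) (hδ' : δ ≤ 1) (s : ℕ) :
    ∃ r : ℝ≥0, (r : ℝ) ≤ s + 4 / δ ^ 2 * (√(s : ℝ) + 1) ∧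
      ∀ x, tvDist (heatKernel P r x) pi ≤ tvDist (avePow P s x) pi + δ := by
  set q := √(s : ℝ)
  have hq : 0 ≤ q := Real.sqrt_nonneg _
  have hqs : q ^ 2 = s := Real.sq_sqrt s.cast_nonneg
  have hscale : 1 ≤ 4 / δ ^ 2 := (one_le_div (by positivity)).2 (by nlinarith)
  let r : ℝ≥0 := ⟨s + 4 / δ ^ 2 * (q + 1), by positivity⟩
  have hr : (r : ℝ) = s + 4 / δ ^ 2 * (q + 1) := rfl
  have hsr : (s : ℝ) < r := hr ▸ lt_add_of_pos_right _ (by positivity)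
  have htail : (r : ℝ) / (r - s) ^ 2 ≤ δ / 2 := by
    refine div_sq_le_half (a := 2 / δ * (q + 1)) hδ hδ' (by positivity) ?_ ?_
    · calc (r : ℝ) ≤ 4 / δ ^ 2 * q ^ 2 + 4 / δ ^ 2 * (q + 1) := by
            rw [hr, ← hqs]
            gcongr
            exact le_mul_of_one_le_left (sq_nonneg q) hscale
        _ ≤ 4 / δ ^ 2 * (q + 1) ^ 2 := by
            rw [← mul_add]
            gcongr
            nlinarith
        _ = (2 / δ * (q + 1)) ^ 2 := by ring
    · rw [hr]
      exact le_of_eq (by ring)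
  have hsmooth : 1 / √(r : ℝ) ≤ δ / 2 := by
    refine one_div_le_half hδ (Real.le_sqrt_of_sq_le ?_)
    calc (2 / δ) ^ 2 = 4 / δ ^ 2 := by ring
      _ ≤ 4 / δ ^ 2 * (q + 1) := le_mul_of_one_le_right (by positivity) (by linarith)
      _ ≤ r := hr ▸ le_add_of_nonneg_left s.cast_nonneg
  refine ⟨r, hr.le, fun x => ?_⟩
  linarith [tvDist_heatKernel_le hP hpi hstat hsr x]

theorem exists_tvDist_avePow_le_add (hP : IsStochastic P) (hpi : IsProbVec pi)
    (hstat : pi ᵥ* P = pi) (hrev : IsReversible P pi) (hδ : 0 < δ) (hδ' : δ ≤ 1) (r : ℝ≥0) :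
    ∃ s : ℕ, (s : ℝ) ≤ r + 21 / δ ^ 2 * (√(r : ℝ) + 1) ∧
      ∀ x, tvDist (avePow P s x) pi ≤ tvDist (heatKernel P r x) pi + δ := by
  set q := √(r : ℝ)
  have hq : 0 ≤ q := Real.sqrt_nonneg _
  have hqr : q ^ 2 = r := Real.sq_sqrt r.2
  set J := ⌈2 / δ * (q + 1)⌉₊
  set L := ⌈2 / δ * 1⌉₊
  have hJ : 0 < J := Nat.ceil_pos.2 (by positivity)
  have hL : 0 < L := Nat.ceil_pos.2 (by positivity)
  have hJδ : (J : ℝ) ≤ 3 / δ * (q + 1) := natCast_ceil_two_div_mul_le hδ hδ' (by linarith)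
  have hLδ : (L : ℝ) ≤ 3 / δ * 1 := natCast_ceil_two_div_mul_le hδ hδ' le_rfl
  have htail : (r : ℝ) / J ^ 2 ≤ δ / 2 :=
    div_sq_le_half hδ hδ' (by positivity) (by nlinarith) (Nat.le_ceil (2 / δ * (q + 1)))
  have hwindow : (J : ℝ) / (J * L : ℕ) ≤ δ / 2 := by
    have hcancel : (J : ℝ) / (J * L : ℕ) = 1 / L := by
      push_cast
      field_simp
    exact hcancel ▸ one_div_le_half hδ ((mul_one (2 / δ)).symm.trans_le (Nat.le_ceil _))
  refine ⟨⌊r⌋₊ + (2 * (J * L) + J), ?_, fun x => ?_⟩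
  · have hcoeff : (2 * L + 1 : ℝ) ≤ 7 / δ := by
      have hsplit : 7 / δ = 2 * (3 / δ * 1) + 1 / δ := by ring
      linarith [one_le_one_div hδ hδ']
    have hfloor : (⌊r⌋₊ : ℝ) ≤ r := Nat.floor_le r.2
    calc ((⌊r⌋₊ + (2 * (J * L) + J) : ℕ) : ℝ) = ⌊r⌋₊ + (2 * L + 1) * J := by push_cast; ring
      _ ≤ r + 7 / δ * (3 / δ * (q + 1)) := by gcongr
      _ = r + 21 / δ ^ 2 * (q + 1) := by ring
  · linarith [tvDist_avePow_le hP hpi hstat hrev r hJ (Nat.mul_pos hJ hL) x]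

lemma tvDist_avePow_succ_le (hP : IsStochastic P) (k : ℕ) (x : Ω) :
    tvDist (avePow P k x) (avePow P (k + 1) x) ≤ 1 / 2 := by
  have hhalf : tvDist (avePow P k x) (avePow P (k + 1) x) =
      tvDist ((P ^ k) x) ((P ^ (k + 2)) x) / 2 := by
    have habs (y : Ω) : |avePow P k x y - avePow P (k + 1) x y| =
        |(P ^ k) x y - (P ^ (k + 2)) x y| / 2 := by
      have hdiff : avePow P k x y - avePow P (k + 1) x y =
          ((P ^ k) x y - (P ^ (k + 2)) x y) / 2 := by
        simp only [avePow, Matrix.smul_apply, Matrix.add_apply, smul_eq_mul, add_assoc,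
          Nat.reduceAdd]
        ring
      rw [hdiff, abs_div, abs_two]
    simp only [tvDist, habs, Finset.sum_div]
  rw [hhalf]
  gcongr
  exact ((hP.pow k).isProbVec_row x).tvDist_le_one ((hP.pow (k + 2)).isProbVec_row x)

namespace IsRevMC

lemma tvDist_avePow_aveMix_le (h : IsRevMC P pi) (hε : 0 < ε) (x : Ω) :
    tvDist (avePow P (aveMix P pi ε) x) pi ≤ ε := by
  have := h.1.2.2.1.nonempty
  set δ := min (ε / 2) 1
  obtain ⟨r, hr⟩ := h.1.exists_forall_tvDist_heatKernel_le (half_pos hε)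
  obtain ⟨s, -, hs⟩ :=
    exists_tvDist_avePow_le_add h.1.1 h.1.2.2.1 h.1.2.2.2 h.2 (lt_min (half_pos hε) one_pos)
      (min_le_right (ε / 2) 1) r
  have hmixed : aveDistMax P pi s ≤ ε := aveDistMax_le_iff.2 fun y => by
    linarith [hs y, hr y, min_le_left (ε / 2) 1]
  exact aveDistMax_le_iff.1 (Nat.sInf_mem (s := {k : ℕ | aveDistMax P pi k ≤ ε}) ⟨s, hmixed⟩) x

lemma aveMix_anti (h : IsRevMC P pi) (hε : 0 < ε) (hεη : ε ≤ η) :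
    aveMix P pi η ≤ aveMix P pi ε :=
  have := h.1.2.2.1.nonempty
  aveMix_le fun x => (h.tvDist_avePow_aveMix_le hε x).trans hεη

lemma aveMix_add_half_lt (h : IsRevMC P pi) (hε : 0 < ε) (hpos : 0 < aveMix P pi (ε + 1 / 2)) :
    aveMix P pi (ε + 1 / 2) < aveMix P pi ε := by
  have := h.1.2.2.1.nonempty
  refine (h.aveMix_anti hε (by linarith)).lt_of_ne fun heq => ?_
  obtain ⟨k, hk⟩ := Nat.exists_eq_succ_of_ne_zero hpos.ne'
  have hle : aveMix P pi (ε + 1 / 2) ≤ k := aveMix_le fun x => by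
    have hmixed := h.tvDist_avePow_aveMix_le hε x
    rw [← heq, hk] at hmixed
    linarith [tvDist_triangle (μ := avePow P k x) (ν := avePow P (k + 1) x) (ρ := pi),
      tvDist_avePow_succ_le h.1.1 k x]
  omega

theorem contMix_le_aveMix_add (h : IsRevMC P pi) (hε : 0 < ε) (hδ : 0 < δ) (hδ' : δ ≤ 1) :
    contMix P pi (ε + δ) ≤ aveMix P pi ε + 4 / δ ^ 2 * (√(aveMix P pi ε : ℝ) + 1) := by
  have := h.1.2.2.1.nonempty
  obtain ⟨r, hr, hmixed⟩ := exists_tvDist_heatKernel_le_add h.1.1 h.1.2.2.1 h.1.2.2.2 hδ hδ'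
    (aveMix P pi ε)
  exact (contMix_le fun x => (hmixed x).trans
    (by gcongr; exact h.tvDist_avePow_aveMix_le hε x)).trans hr

theorem aveMix_le_contMix_add (h : IsRevMC P pi) (hε : 0 < ε) (hδ : 0 < δ) (hδ' : δ ≤ 1) :
    aveMix P pi (ε + δ) ≤ contMix P pi ε + 21 / δ ^ 2 * (√(contMix P pi ε) + 1) := by
  have := h.1.2.2.1.nonempty
  refine h.1.le_map_contMix hε (φ := fun t => t + 21 / δ ^ 2 * (√t + 1)) (by fun_prop)
    (fun t u htu => by dsimp only; gcongr) fun r hr => ?_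
  obtain ⟨s, hs, hmixed⟩ := exists_tvDist_avePow_le_add h.1.1 h.1.2.2.1 h.1.2.2.2 h.2 hδ hδ' r
  refine le_trans (Nat.cast_le.2 (aveMix_le fun x => ?_)) hs
  exact (hmixed x).trans (by gcongr; exact hr x)

theorem contMix_sub_contMix_le (h : IsRevMC P pi) (hε : 0 < ε) (hη : 0 < η) (hδ : 0 < δ)
    (hδ' : δ ≤ 1) : contMix P pi (ε + δ) - contMix P pi η ≤
      aveMix P pi ε - aveMix P pi (η + δ) + (4 / δ ^ 2 * (√(aveMix P pi ε : ℝ) + 1) +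
        21 / δ ^ 2 * (√(contMix P pi η) + 1)) := by
  linarith [h.contMix_le_aveMix_add hε hδ hδ', h.aveMix_le_contMix_add hη hδ hδ']

end IsRevMC

end MixingTimes

section Asymptotics

open Topology

variable {ι : Type*} {l : Filter ι} {f g h u : ι → ℝ}

lemma isEquivalent_of_le_of_le (hf : f ~[l] u) (hh : h ~[l] u) (hfg : f ≤ᶠ[l] g)
    (hgh : g ≤ᶠ[l] h) : g ~[l] u := by
  have hbound : (g - u) =O[l] fun a => ‖(f - u) a‖ + ‖(h - u) a‖ := by
    refine .of_norm_eventuallyLE ?_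
    filter_upwards [hfg, hgh] with a hfga hgha
    exact (abs_le_max_abs_abs (sub_le_sub_right hfga _) (sub_le_sub_right hgha _)).trans
      (max_le_add_of_nonneg (abs_nonneg _) (abs_nonneg _))
  exact hbound.trans_isLittleO (hf.isLittleO.norm_left.add hh.isLittleO.norm_left)

lemma isLittleO_one_of_tendsto_atTop (hu : Tendsto u l atTop) : (fun _ => (1 : ℝ)) =o[l] u :=
  (isLittleO_one_left_iff ℝ).2 (tendsto_norm_atTop_atTop.comp hu)

lemma isLittleO_sqrt_self (hu : Tendsto u l atTop) : (fun a => √(u a)) =o[l] u := by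
  have hone := isLittleO_one_of_tendsto_atTop (Real.tendsto_sqrt_atTop.comp hu)
  refine ((isBigO_refl (fun a => √(u a)) l).mul_isLittleO hone).congr' ?_ ?_
  · simp
  · exact (hu.eventually_ge_atTop 0).mono fun _ => Real.mul_self_sqrt

lemma isBigO_sqrt_add_one (hf : f =O[l] u) (hu : Tendsto u l atTop) :
    (fun a => √(f a) + 1) =O[l] fun a => √(u a) :=
  (hf.sqrt (hu.eventually_ge_atTop 0)).add
    (isLittleO_one_of_tendsto_atTop (Real.tendsto_sqrt_atTop.comp hu)).isBigO

lemma isLittleO_sqrt_add_one (hf : f =O[l] u) (hu : Tendsto u l atTop) :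
    (fun a => √(f a) + 1) =o[l] u :=
  (isBigO_sqrt_add_one hf hu).trans_isLittleO (isLittleO_sqrt_self hu)

lemma isLittleO_max (hf : f =o[l] u) (hg : g =o[l] u) : (fun a => max (f a) (g a)) =o[l] u :=
  (IsBigO.of_norm_le fun _ => abs_max_le_max_abs_abs.trans
    (max_le_add_of_nonneg (abs_nonneg _) (abs_nonneg _))).trans_isLittleO
    (hf.norm_left.add hg.norm_left)

end Asymptotics

section Cutoff

variable {Ω : ℕ → Type} [∀ n, Fintype (Ω n)] [∀ n, DecidableEq (Ω n)]
  {P : ∀ n, Matrix (Ω n) (Ω n) ℝ} {pi : ∀ n, Ω n → ℝ} {w : ℕ → ℝ} {ε η : ℝ}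

namespace AveCutoff

lemma isEquivalent_one_sub (hcut : AveCutoff P pi) (hε : 0 < ε) (hε' : ε < 1) :
    (fun n => (aveMix (P n) (pi n) ε : ℝ)) ~[atTop] fun n => (aveMix (P n) (pi n) (1 - ε) : ℝ) :=
  isEquivalent_of_tendsto_one (hcut ε hε hε')

lemma isEquivalent_aveMix_of_mem_Icc (hcut : AveCutoff P pi) (hMC : ∀ n, IsRevMC (P n) (pi n))
    (hη : 0 < η) (hε : ε ∈ Set.Icc η (1 - η)) :
    (fun n => (aveMix (P n) (pi n) ε : ℝ)) ~[atTop] fun n => (aveMix (P n) (pi n) η : ℝ) :=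
  isEquivalent_of_le_of_le
    (hcut.isEquivalent_one_sub hη (by linarith [hε.1, hε.2])).symm .refl
    (.of_forall fun n => Nat.cast_le.2 ((hMC n).aveMix_anti (hη.trans_le hε.1) hε.2))
    (.of_forall fun n => Nat.cast_le.2 ((hMC n).aveMix_anti hη hε.1))

lemma isEquivalent_aveMix (hcut : AveCutoff P pi) (hMC : ∀ n, IsRevMC (P n) (pi n))
    (hε : ε ∈ Set.Ioo 0 1) (hη : η ∈ Set.Ioo 0 1) :
    (fun n => (aveMix (P n) (pi n) ε : ℝ)) ~[atTop] fun n => (aveMix (P n) (pi n) η : ℝ) := by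
  set θ := min (min ε (1 - ε)) (min η (1 - η)) with hθ_def
  have hθ : 0 < θ := by simp [hθ_def, hε.1, hε.2, hη.1, hη.2]
  have hle : (θ ≤ ε ∧ θ ≤ 1 - ε) ∧ (θ ≤ η ∧ θ ≤ 1 - η) := by
    simpa only [le_min_iff] using hθ_def.le
  exact (hcut.isEquivalent_aveMix_of_mem_Icc hMC hθ ⟨hle.1.1, by linarith⟩).trans
    (hcut.isEquivalent_aveMix_of_mem_Icc hMC hθ ⟨hle.2.1, by linarith⟩).symm

-- The averaged mixing time drops by at least one between `1/4` and `3/4`, and cutoff makes this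
-- drop negligible.
lemma tendsto_aveMix_atTop (hcut : AveCutoff P pi) (hMC : ∀ n, IsRevMC (P n) (pi n))
    (hε : ε ∈ Set.Ioo 0 1) : Tendsto (fun n => (aveMix (P n) (pi n) ε : ℝ)) atTop atTop := by
  have hratio := hcut (1 / 4) (by norm_num) (by norm_num)
  have hdrop := (hcut.isEquivalent_one_sub (ε := 1 / 4) (by norm_num) (by norm_num)).isLittleO
  norm_num only at hratio hdrop
  have hone : (fun _ => (1 : ℝ)) =o[atTop] fun n => (aveMix (P n) (pi n) (3 / 4) : ℝ) := by
    refine IsBigO.trans_isLittleO (.of_norm_eventuallyLE ?_) hdrop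
    filter_upwards [hratio.eventually_ne one_ne_zero] with n hn
    have hpos : 0 < aveMix (P n) (pi n) (3 / 4) :=
      Nat.pos_of_ne_zero fun hzero => hn (by simp [hzero])
    have hlt : aveMix (P n) (pi n) (1 / 4 + 1 / 2) < aveMix (P n) (pi n) (1 / 4) :=
      (hMC n).aveMix_add_half_lt (by norm_num) (by convert hpos using 2; norm_num)
    norm_num only at hlt
    have hlt' : (aveMix (P n) (pi n) (3 / 4) : ℝ) + 1 ≤ aveMix (P n) (pi n) (1 / 4) :=
      mod_cast hlt
    rw [norm_one]
    exact le_sub_iff_add_le'.2 hlt'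
  rw [(hcut.isEquivalent_aveMix hMC hε (η := 3 / 4) (by norm_num)).tendsto_atTop_iff]
  simpa using (isLittleO_one_left_iff ℝ).1 hone

theorem isEquivalent_contMix_aveMix (hcut : AveCutoff P pi) (hMC : ∀ n, IsRevMC (P n) (pi n))
    (hε : ε ∈ Set.Ioo 0 1) (hη : η ∈ Set.Ioo 0 1) :
    (fun n => contMix (P n) (pi n) ε) ~[atTop] fun n => (aveMix (P n) (pi n) η : ℝ) := by
  have hT := hcut.tendsto_aveMix_atTop hMC hη
  have hsmall : ε / 2 ∈ Set.Ioo 0 1 := ⟨by linarith [hε.1], by linarith [hε.2]⟩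
  have hlarge : ε + (1 - ε) / 2 ∈ Set.Ioo 0 1 := ⟨by linarith [hε.1, hε.2], by linarith [hε.2]⟩
  have hlower_eq := hcut.isEquivalent_aveMix hMC hlarge hη
  have hupper_eq := hcut.isEquivalent_aveMix hMC hsmall hη
  have hupper := hupper_eq.add_isLittleO
    ((isLittleO_sqrt_add_one hupper_eq.isBigO hT).const_mul_left (4 / (ε / 2) ^ 2))
  have hle_upper (n : ℕ) := add_halves ε ▸
    (hMC n).contMix_le_aveMix_add hsmall.1 hsmall.1 hsmall.2.le
  have hbig : (fun n => contMix (P n) (pi n) ε) =O[atTop]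
      fun n => (aveMix (P n) (pi n) η : ℝ) :=
    .trans (.of_norm_le fun n => by
      rw [Real.norm_of_nonneg contMix_nonneg]
      exact hle_upper n) hupper.isBigO
  have hlower := hlower_eq.sub_isLittleO
    ((isLittleO_sqrt_add_one hbig hT).const_mul_left (21 / ((1 - ε) / 2) ^ 2))
  refine isEquivalent_of_le_of_le hlower hupper (.of_forall fun n => ?_) (.of_forall hle_upper)
  exact sub_le_iff_le_add.2
    ((hMC n).aveMix_le_contMix_add hε.1 (by linarith [hε.2]) (by linarith [hε.1]))

lemma isEquivalent_contMix (hcut : AveCutoff P pi) (hMC : ∀ n, IsRevMC (P n) (pi n))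
    (hε : ε ∈ Set.Ioo 0 1) (hη : η ∈ Set.Ioo 0 1) :
    (fun n => contMix (P n) (pi n) ε) ~[atTop] fun n => contMix (P n) (pi n) η :=
  (hcut.isEquivalent_contMix_aveMix hMC hε hη).trans
    (hcut.isEquivalent_contMix_aveMix hMC hη hη).symm

lemma tendsto_contMix_atTop (hcut : AveCutoff P pi) (hMC : ∀ n, IsRevMC (P n) (pi n))
    (hε : ε ∈ Set.Ioo 0 1) : Tendsto (fun n => contMix (P n) (pi n) ε) atTop atTop :=
  (hcut.isEquivalent_contMix_aveMix hMC hε hε).symm.tendsto_atTop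
    (hcut.tendsto_aveMix_atTop hMC hε)

theorem contCutoff (hcut : AveCutoff P pi) (hMC : ∀ n, IsRevMC (P n) (pi n)) :
    ContCutoff P pi := fun ε hε hε' => by
  have hε₁ : 1 - ε ∈ Set.Ioo 0 1 := ⟨by linarith, by linarith⟩
  have hne := (hcut.tendsto_contMix_atTop hMC hε₁).eventually_ne_atTop 0
  exact (isEquivalent_iff_tendsto_one hne).1 (hcut.isEquivalent_contMix hMC ⟨hε, hε'⟩ hε₁)

end AveCutoff

namespace AveCutoffWindow

theorem isBigO_contMix_sub (hcut : AveCutoffWindow P pi w) (hMC : ∀ n, IsRevMC (P n) (pi n))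
    (hε : 0 < ε) (hε' : ε ≤ 1 / 4) :
    (fun n => contMix (P n) (pi n) ε - contMix (P n) (pi n) (1 - ε)) =O[atTop]
      fun n => max (w n) √(contMix (P n) (pi n) (1 / 4)) := by
  obtain ⟨C, hC, hgap⟩ := hcut.2.2 (ε / 2) (half_pos hε) (by linarith)
  have hquarter : (1 / 4 : ℝ) ∈ Set.Ioo 0 1 := by norm_num
  have htop := hcut.1.tendsto_contMix_atTop hMC hquarter
  have haveMix : (fun n => (aveMix (P n) (pi n) (ε / 2) : ℝ)) =O[atTop]
      fun n => contMix (P n) (pi n) (1 / 4) :=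
    (hcut.1.isEquivalent_contMix_aveMix hMC hquarter ⟨half_pos hε, by linarith⟩).isBigO_symm
  have hcontMix : (fun n => contMix (P n) (pi n) (1 - ε)) =O[atTop]
      fun n => contMix (P n) (pi n) (1 / 4) :=
    (hcut.1.isEquivalent_contMix hMC ⟨by linarith, by linarith⟩ hquarter).isBigO
  have herror := ((isBigO_sqrt_add_one haveMix htop).const_mul_left (4 / (ε / 2) ^ 2)).add
    ((isBigO_sqrt_add_one hcontMix htop).const_mul_left (21 / (ε / 2) ^ 2))
  have hsqrt : (fun n => √(contMix (P n) (pi n) (1 / 4))) =O[atTop]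
      fun n => max (w n) √(contMix (P n) (pi n) (1 / 4)) :=
    .of_norm_le fun n => by
      rw [Real.norm_of_nonneg (Real.sqrt_nonneg _)]
      exact le_max_right _ _
  have hgap_isBigO : (fun n => (aveMix (P n) (pi n) (ε / 2) : ℝ) -
      aveMix (P n) (pi n) (1 - ε / 2)) =O[atTop]
      fun n => max (w n) √(contMix (P n) (pi n) (1 / 4)) :=
    .of_bound C <| .of_forall fun n => by
      rw [Real.norm_of_nonneg (sub_nonneg.2 (Nat.cast_le.2
        ((hMC n).aveMix_anti (half_pos hε) (by linarith))))]
      exact (hgap n).trans (by gcongr; exact (le_max_left _ _).trans (le_abs_self _))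
  refine .trans (.of_norm_le fun n => ?_) (hgap_isBigO.add (herror.trans hsqrt))
  have hle := (hMC n).contMix_sub_contMix_le (half_pos hε) (show 0 < 1 - ε by linarith)
    (half_pos hε) (by linarith)
  rw [add_halves, show 1 - ε + ε / 2 = 1 - ε / 2 by ring] at hle
  rw [Real.norm_of_nonneg (sub_nonneg.2 ((hMC n).1.contMix_anti hε (by linarith)))]
  exact hle

lemma exists_contMix_sub_le (hcut : AveCutoffWindow P pi w) (hMC : ∀ n, IsRevMC (P n) (pi n))
    (hε : 0 < ε) (hε' : ε ≤ 1 / 4) :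
    ∃ C : ℝ, 0 < C ∧ ∀ n, contMix (P n) (pi n) ε - contMix (P n) (pi n) (1 - ε) ≤
      C * max (w n) √(contMix (P n) (pi n) (1 / 4)) := by
  obtain ⟨C, hC, hbound⟩ := bound_of_isBigO_nat_atTop (hcut.isBigO_contMix_sub hMC hε hε')
  refine ⟨C, hC, fun n => ?_⟩
  have hwindow : 0 ≤ max (w n) √(contMix (P n) (pi n) (1 / 4)) :=
    le_max_of_le_right (Real.sqrt_nonneg _)
  rcases hwindow.eq_or_lt with hzero | hpos
  · have hsqrt : √(contMix (P n) (pi n) (1 / 4)) = 0 :=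
      le_antisymm ((le_max_right _ _).trans_eq hzero.symm) (Real.sqrt_nonneg _)
    have := (hMC n).1.subsingleton_of_contMix_eq_zero (by norm_num) (by norm_num)
      ((Real.sqrt_eq_zero contMix_nonneg).1 hsqrt)
    rw [← hzero, mul_zero, contMix_eq_zero_of_subsingleton (hMC n).1.1 (hMC n).1.2.2.1 hε.le]
    linarith [contMix_nonneg (P := P n) (pi := pi n) (ε := 1 - ε)]
  · exact (le_abs_self _).trans ((hbound hpos.ne').trans_eq (by rw [Real.norm_of_nonneg hwindow]))

end AveCutoffWindow

end Cutoff

/-- **Theorem 3 (ii) of Hermon–Peres.**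
If a sequence of finite irreducible reversible Markov chains exhibits an averaged cutoff
with window `w`, then it exhibits a continuous-time cutoff with window
`w'_n = max (w_n, √(t_c^{(n)}))`. -/
theorem contCutoffWindow_of_aveCutoffWindow :
    ∀ (Ω : ℕ → Type) [∀ n, Fintype (Ω n)] [∀ n, DecidableEq (Ω n)] [∀ n, Nonempty (Ω n)]
      (P : ∀ n, Matrix (Ω n) (Ω n) ℝ) (pi : ∀ n, Ω n → ℝ) (w : ℕ → ℝ),
      (∀ n, IsRevMC (P n) (pi n)) →
      AveCutoffWindow P pi w →
      ContCutoffWindow P pi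
        (fun n => max (w n) (Real.sqrt (contMix (P n) (pi n) (1 / 4)))) := by
  intro Ω _ _ _ P pi w hMC hcut
  have hquarter : (1 / 4 : ℝ) ∈ Set.Ioo 0 1 := by norm_num
  have hwindow : w =o[atTop] fun n => contMix (P n) (pi n) (1 / 4) :=
    hcut.2.1.trans_isBigO
      (hcut.1.isEquivalent_contMix_aveMix hMC hquarter hquarter).isBigO_symm
  have hsqrt := isLittleO_sqrt_self (hcut.1.tendsto_contMix_atTop hMC hquarter)
  exact ⟨hcut.1.contCutoff hMC, isLittleO_max hwindow hsqrt,
    fun ε hε hε' => hcut.exists_contMix_sub_le hMC hε hε'⟩
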